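/- Let G=(V,E) be a multigraph without self-loops, let s ∈ V, let f be a basic s-cycle packing of G, let W = (v₀,e₁,…,v_l) be an f-augmenting walk, and let f_W : E → {0,1/2,1} be the function obtained by augmenting f along W. Then f_W is a basic s-cycle packing; moreover, if v_l = s then the size of f_W equals the size of f plus one, and otherwise the size of f_W equals the size of f plus 1/2. -/

import Mathlib

/-- A multigraph on vertex type `V` with edge type `E`: each edge has an
unordered pair of endpoints.  Parallel edges are distinguished (they are
different elements of `E`), and self-loops are edges whose endpoint pair is
diagonal. -/
structure Multigraph (V : Type) (E : Type) where
  ends : E → Sym2 V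

namespace Multigraph

variable {V E : Type}

/-- A multigraph has no self-loops. -/
def LoopFree (G : Multigraph V E) : Prop := ∀ e : E, ¬ (G.ends e).IsDiag

/-- The degree of a vertex: the number of incident edges (parallel edges
counted with multiplicity). -/
noncomputable def degree (G : Multigraph V E) (v : V) : ℕ :=
  Nat.card {e : E // v ∈ G.ends e}

/-- A walk `(v₀, e₁, v₁, …, e_l, v_l)` of positive length `l ≥ 1` in which
each edge `eᵢ` joins `v_{i-1}` and `vᵢ`. -/
structure Walk (G : Multigraph V E) where
  len : ℕ
  len_pos : 0 < len
  verts : Fin (len + 1) → V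
  edges : Fin len → E
  valid : ∀ i : Fin len, G.ends (edges i) = s(verts i.castSucc, verts i.succ)

namespace Walk

variable {G : Multigraph V E}

/-- The first vertex of a walk. -/
def start (W : G.Walk) : V := W.verts 0

/-- The last vertex of a walk. -/
def finish (W : G.Walk) : V := W.verts (Fin.last W.len)

/-- A cycle: a closed walk of positive length with pairwise distinct edges and
pairwise distinct vertices (except that the first and last vertex coincide). -/
def IsCycle (W : G.Walk) : Prop :=
  W.start = W.finish ∧ Function.Injective W.edges ∧
    Function.Injective fun i : Fin W.len => W.verts i.castSucc

/-- An `s`-cycle: a walk with `v₀ = v_l = s`, with `vᵢ ≠ s` for `0 < i < l`,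
with no U-turns (`eᵢ ≠ e_{i+1}`), and in which every edge occurs at most
twice. -/
def IsSCycle (W : G.Walk) (s : V) : Prop :=
  W.start = s ∧ W.finish = s ∧
  (∀ i : Fin (W.len + 1), i ≠ 0 → i ≠ Fin.last W.len → W.verts i ≠ s) ∧
  (∀ i j : Fin W.len, (i : ℕ) + 1 = (j : ℕ) → W.edges i ≠ W.edges j) ∧
  (∀ e : E, Nat.card {i : Fin W.len // W.edges i = e} ≤ 2)

/-- The multiplicity of a vertex `v` in the multiset `V(W)` of vertices of a
walk `W`. -/
noncomputable def vertCount (W : G.Walk) (v : V) : ℕ :=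
  Nat.card {i : Fin (W.len + 1) // W.verts i = v}

end Walk

/-- `S` is a feedback vertex set: every cycle of `G` meets `S`
(equivalently, `G − S` contains no cycle). -/
def IsFVS (G : Multigraph V E) (S : Set V) : Prop :=
  ∀ W : G.Walk, W.IsCycle → ∃ i, W.verts i ∈ S

/-- The minimum size of a feedback vertex set. -/
noncomputable def fvs [Fintype V] (G : Multigraph V E) : ℕ :=
  sInf {n : ℕ | ∃ S : Set V, G.IsFVS S ∧ S.ncard = n}

/-- `x : V → ℝ≥0` is an `s`-cycle cover: `x s = 0` and every `s`-cycle `C`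
satisfies `x(V(C)) ≥ 1` (vertices counted with multiplicity). -/
def IsSCycleCover (G : Multigraph V E) (s : V) (x : V → ℝ) : Prop :=
  (∀ v, 0 ≤ x v) ∧ x s = 0 ∧
    ∀ W : G.Walk, W.IsSCycle s → 1 ≤ ∑ i, x (W.verts i)

/-- A function is half-integral if it takes values in `{0, 1/2, 1}`. -/
def HalfIntegral (x : V → ℝ) : Prop := ∀ v, x v = 0 ∨ x v = 1/2 ∨ x v = 1

/-- A minimum `s`-cycle cover. -/
def IsMinSCycleCover [Fintype V] (G : Multigraph V E) (s : V) (x : V → ℝ) : Prop :=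
  G.IsSCycleCover s x ∧ ∀ x' : V → ℝ, G.IsSCycleCover s x' → ∑ v, x v ≤ ∑ v, x' v

/-- An `s`-cycle packing: a nonnegative, finitely supported weighting of the
`s`-cycles such that every vertex `v ≠ s` is used (with multiplicity) with
total weight at most `1`. -/
def IsSCyclePacking (G : Multigraph V E) (s : V) (y : G.Walk →₀ ℝ) : Prop :=
  (∀ W, 0 ≤ y W) ∧ (∀ W, y W ≠ 0 → W.IsSCycle s) ∧
    ∀ v : V, v ≠ s → ∑ W ∈ y.support, (W.vertCount v : ℝ) * y W ≤ 1

/-- The size of an `s`-cycle packing. -/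
noncomputable def packingSize {G : Multigraph V E} (y : G.Walk →₀ ℝ) : ℝ :=
  ∑ W ∈ y.support, y W

/-- Number of edges incident to `v` with `f`-value 1. -/
noncomputable def cnt1 (G : Multigraph V E) (f : E → ℝ) (v : V) : ℕ :=
  Nat.card {e : E // v ∈ G.ends e ∧ f e = 1}

/-- Number of edges incident to `v` with `f`-value 1/2. -/
noncomputable def cntH (G : Multigraph V E) (f : E → ℝ) (v : V) : ℕ :=
  Nat.card {e : E // v ∈ G.ends e ∧ f e = 1/2}

/-- type-O: all incident edges have `f`-value 0. -/
def IsTypeO (G : Multigraph V E) (f : E → ℝ) (v : V) : Prop :=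
  ∀ e : E, v ∈ G.ends e → f e = 0

/-- type-I: exactly two incident edges have value 1 and none has value 1/2. -/
def IsTypeI (G : Multigraph V E) (f : E → ℝ) (v : V) : Prop :=
  G.cnt1 f v = 2 ∧ G.cntH f v = 0

/-- type-H: no incident edge has value 1 and exactly two have value 1/2. -/
def IsTypeH (G : Multigraph V E) (f : E → ℝ) (v : V) : Prop :=
  G.cnt1 f v = 0 ∧ G.cntH f v = 2

/-- type-T: exactly one incident edge has value 1 and exactly two have value 1/2. -/
def IsTypeT (G : Multigraph V E) (f : E → ℝ) (v : V) : Prop :=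
  G.cnt1 f v = 1 ∧ G.cntH f v = 2

/-- A basic `s`-cycle packing: `f : E → {0,1/2,1}` with `f(e) ∈ {0,1}` on edges
incident to `s`, every vertex `v ≠ s` of one of the four types O, I, H, T, and
every cycle consisting of edges of value 1/2 (i.e. every half-integral cycle)
containing an odd number of type-T vertices. -/
def IsBasicSCyclePacking (G : Multigraph V E) (s : V) (f : E → ℝ) : Prop :=
  (∀ e : E, f e = 0 ∨ f e = 1/2 ∨ f e = 1) ∧
  (∀ e : E, s ∈ G.ends e → f e = 0 ∨ f e = 1) ∧
  (∀ v : V, v ≠ s →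
    G.IsTypeO f v ∨ G.IsTypeI f v ∨ G.IsTypeH f v ∨ G.IsTypeT f v) ∧
  (∀ W : G.Walk, W.IsCycle → (∀ j, f (W.edges j) = 1/2) →
    Odd (Nat.card {i : Fin W.len // G.IsTypeT f (W.verts i.castSucc)}))

/-- The size of a basic `s`-cycle packing: `(1/2) · Σ_{e ∈ δ(s)} f(e)`. -/
noncomputable def basicSize [Fintype E] (G : Multigraph V E) (s : V) (f : E → ℝ) : ℝ :=
  (1/2) * ∑ e : E, Set.indicator {e' : E | s ∈ G.ends e'} f e

/-- `u` and `v` are connected by a walk avoiding the vertex set `S` and the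
edge set `F` (or `u = v`). -/
def Reach (G : Multigraph V E) (S : Set V) (F : Set E) (u v : V) : Prop :=
  u = v ∨ ∃ W : G.Walk, (∀ i, W.verts i ∉ S) ∧ (∀ j, W.edges j ∉ F) ∧
    W.start = u ∧ W.finish = v

/-- The edge `e` belongs to the set `B` of the `s`-cycle cover reduction with
respect to the set `X`: `e` joins `s` to some `u ∉ X`, `e` is a bridge of
`G − X` (its endpoints are disconnected in `G − X − e`), and the connected
component of `u` in `G − X − s` is a tree (no cycle of `G − X − s` passes
through a vertex reachable from `u` in `G − X − s`). -/
def InB (G : Multigraph V E) (s : V) (X : Set V) (e : E) : Prop :=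
  ∃ u : V, G.ends e = s(s, u) ∧ u ≠ s ∧ u ∉ X ∧ s ∉ X ∧
    ¬ G.Reach X {e} s u ∧
    ¬ ∃ W : G.Walk, W.IsCycle ∧ (∀ i, W.verts i ∉ X ∪ {s}) ∧
        G.Reach (X ∪ {s}) ∅ u W.start

/-- The graph `G' = (V, E')` obtained from `G` by the `s`-cycle cover
reduction with respect to a half-integral `s`-cycle cover `x`: with
`X = x⁻¹(1)`, insert a double edge (two new parallel edges) between `s` and
each `v ∈ X`, and delete the edges of `B`. -/
def reduced (G : Multigraph V E) (s : V) (x : V → ℝ) :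
    Multigraph V ({e : E // ¬ G.InB s {v : V | x v = 1} e} ⊕ ({v : V // x v = 1} × Bool)) where
  ends := fun e =>
    match e with
    | .inl e' => G.ends e'.val
    | .inr p => s(s, p.1.val)

/-- The graph `G − s` obtained by deleting the vertex `s` and all incident
edges (the vertex `s` is kept as an isolated vertex). -/
def deleteVertex (G : Multigraph V E) (s : V) :
    Multigraph V {e : E // s ∉ G.ends e} where
  ends := fun e => G.ends e.val

/-- An `f`-augmenting walk for a basic `s`-cycle packing `f`:
(1) it starts at `s`; (2) its first edge has value 0; (3) its edges are
pairwise distinct; (4) its vertices `v₀,…,v_{l-1}` are pairwise distinct;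
(5) each interior vertex `vᵢ` (`1 ≤ i ≤ l-1`) is type-O, or type-I with
`f(e) = 1` for at least one of `e ∈ {eᵢ, e_{i+1}}`; (6) if the last vertex
`v_l` equals `vᵢ` for some `i < l` then: `v_l = s` and `f(e_l) = 0`, or `v_l`
is type-O, or `v_l` is type-I and `f(e) = 1` for at least one of
`e ∈ {eᵢ, e_l}`; (7) if `v_l` is a new vertex then it is type-H or type-T. -/
def IsAugmentingWalk (G : Multigraph V E) (s : V) (f : E → ℝ) (W : G.Walk) : Prop :=
  W.start = s ∧
  f (W.edges ⟨0, W.len_pos⟩) = 0 ∧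
  Function.Injective W.edges ∧
  Function.Injective (fun i : Fin W.len => W.verts i.castSucc) ∧
  (∀ i : Fin W.len, 0 < i.val →
    (G.IsTypeO f (W.verts i.castSucc) ∨
      (G.IsTypeI f (W.verts i.castSucc) ∧
        (f (W.edges ⟨i.val - 1, Nat.lt_of_le_of_lt (Nat.sub_le _ _) i.isLt⟩) = 1 ∨
          f (W.edges i) = 1)))) ∧
  (∀ i : Fin W.len, W.finish = W.verts i.castSucc →
    ((W.finish = s ∧ f (W.edges ⟨W.len - 1, Nat.sub_lt W.len_pos Nat.one_pos⟩) = 0) ∨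
     (W.finish ≠ s ∧ G.IsTypeO f W.finish) ∨
     (W.finish ≠ s ∧ G.IsTypeI f W.finish ∧
       (f (W.edges ⟨i.val - 1, Nat.lt_of_le_of_lt (Nat.sub_le _ _) i.isLt⟩) = 1 ∨
         f (W.edges ⟨W.len - 1, Nat.sub_lt W.len_pos Nat.one_pos⟩) = 1)))) ∧
  ((∀ i : Fin W.len, W.finish ≠ W.verts i.castSucc) →
    (G.IsTypeH f W.finish ∨ G.IsTypeT f W.finish))

/-- `g = f_W` is obtained from `f` by augmenting along the walk `W`.
If `v_l = s` (so `h = l`), the values of `f` on `e₁,…,e_l` are flipped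
(`f ↦ 1 − f`).  If `v_l ≠ s` equals an earlier vertex `vᵢ` (so `h = i`), the
values on `e₁,…,e_h` are flipped and the values on `e_{h+1},…,e_l` are set to
`1/2`.  If `v_l ≠ s` is a new vertex (type-H or type-T, with `h = l`), the
values on `e₁,…,e_l` are flipped and, on the half-integral cycle `C` of `v_l`
(traversed from `t₀ = v_l` in either direction), the edges of the segment
`Pᵢ` between consecutive markers `tᵢ, t_{i+1}` (the markers being `v_l`
together with the type-T vertices of `C`) receive value `0` for even `i` and
`1` for odd `i`; the segment index of an edge is the number of type-T
vertices strictly preceding it along the traversal.  All other edges keep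
their `f`-value. -/
def AugmentedAlong (G : Multigraph V E) (s : V) (f : E → ℝ) (W : G.Walk) (g : E → ℝ) : Prop :=
  -- Case A : the walk returns to `s`.
  (W.finish = s ∧
    (∀ j : Fin W.len, g (W.edges j) = 1 - f (W.edges j)) ∧
    (∀ e : E, (∀ j, e ≠ W.edges j) → g e = f e)) ∨
  -- Case B : the last vertex is a repeated vertex `vᵢ ≠ s` (type-O or type-I).
  (W.finish ≠ s ∧
    (∃ i : Fin W.len, W.finish = W.verts i.castSucc ∧
      (∀ j : Fin W.len, j.val < i.val → g (W.edges j) = 1 - f (W.edges j)) ∧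
      (∀ j : Fin W.len, i.val ≤ j.val → g (W.edges j) = 1/2) ∧
      (∀ e : E, (∀ j, e ≠ W.edges j) → g e = f e))) ∨
  -- Case C : the last vertex is a new vertex of type-H or type-T.
  (W.finish ≠ s ∧ (∀ i : Fin W.len, W.finish ≠ W.verts i.castSucc) ∧
    (∃ C : G.Walk, C.IsCycle ∧ C.verts 0 = W.finish ∧
      (∀ j, f (C.edges j) = 1/2) ∧
      (∀ j : Fin W.len, g (W.edges j) = 1 - f (W.edges j)) ∧
      (∀ j : Fin C.len,
        g (C.edges j) =
          if Even (Nat.card {m : Fin C.len //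
              1 ≤ m.val ∧ m.val ≤ j.val ∧ G.IsTypeT f (C.verts m.castSucc)})
          then 0 else 1) ∧
      (∀ e : E, (∀ j, e ≠ W.edges j) → (∀ j, e ≠ C.edges j) → g e = f e)))


end Multigraph

/-!
Complementing `f` on the walk keeps a vertex that the walk passes through in type O or I, since
there the walk uses an edge of value `1` unless all edges have value `0`. What remains to be
understood is the cycle `C` on which values `1/2` are created or removed; it hangs on the
alternating path `P` from `s` like the candy of a lollipop. When values `1/2` are put on `C`, the
complemented function has odd degree at exactly one vertex of `C`, the one at which `P` arrives,
so by the handshake lemma the number of type-T vertices created is odd. When `C` is a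
half-integral cycle of `f`, the values `0` and `1` can alternate along the segments between the
type-T vertices because the number of these is odd, and `P` supplies the parity at the vertex where
it arrives. The first edge of the walk raises the size by `1/2`, and so does its last edge when the
walk closes at `s`.
-/

namespace Multigraph

variable {V E : Type} {G : Multigraph V E} {s v : V} {f g : E → ℝ}

section Counting

/-- The number of edges at `v` of value `c`; by unfolding, `G.cnt1 f` is `G.valCount f 1` and
`G.cntH f` is `G.valCount f (1 / 2)`. -/
noncomputable def valCount (G : Multigraph V E) (f : E → ℝ) (c : ℝ) (v : V) : ℕ :=
  Nat.card {e : E // v ∈ G.ends e ∧ f e = c}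

/-- The edges of `A` incident to `v`, that is, `δ(v) ∩ A`. -/
def incidentIn (G : Multigraph V E) (A : Set E) (v : V) : Set E := {e ∈ A | v ∈ G.ends e}

/-- The vertex `v` has one of the four types O, I, H, T. -/
def HasBasicType (G : Multigraph V E) (f : E → ℝ) (v : V) : Prop :=
  G.IsTypeO f v ∨ G.IsTypeI f v ∨ G.IsTypeH f v ∨ G.IsTypeT f v

variable {A : Set E} {a b e : E} {c : ℝ}

lemma valCount_eq_ncard : G.valCount f c v = {e | v ∈ G.ends e ∧ f e = c}.ncard :=
  Nat.card_coe_set_eq _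

lemma valCount_congr (h : ∀ e, v ∈ G.ends e → g e = f e) :
    G.valCount g c v = G.valCount f c v := by
  rw [valCount_eq_ncard, valCount_eq_ncard]
  congr 1
  ext e
  exact and_congr_right fun he => by rw [h e he]

lemma ncard_sep_pair (hab : a ≠ b) (p : E → Prop) [DecidablePred p] :
    {e ∈ ({a, b} : Set E) | p e}.ncard = (if p a then 1 else 0) + (if p b then 1 else 0) := by
  classical
  have : {e ∈ ({a, b} : Set E) | p e} = ↑(({a, b} : Finset E).filter p) := by ext; simp
  rw [this, Set.ncard_coe_finset, Finset.card_filter, Finset.sum_pair hab]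

lemma ncard_sep_singleton (p : E → Prop) [DecidablePred p] :
    {e ∈ ({a} : Set E) | p e}.ncard = if p a then 1 else 0 := by
  classical
  have : {e ∈ ({a} : Set E) | p e} = ↑(({a} : Finset E).filter p) := by ext; simp
  rw [this, Set.ncard_coe_finset, Finset.card_filter, Finset.sum_singleton]

section Finite

variable [Finite E]

lemma valCount_eq_zero_iff : G.valCount f c v = 0 ↔ ∀ e, v ∈ G.ends e → f e ≠ c := by
  rw [valCount_eq_ncard, Set.ncard_eq_zero, Set.eq_empty_iff_forall_notMem]
  simp

lemma valCount_add_ncard (h : Set.EqOn g f Aᶜ) :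
    G.valCount g c v + {e ∈ G.incidentIn A v | f e = c}.ncard =
      G.valCount f c v + {e ∈ G.incidentIn A v | g e = c}.ncard := by
  have inter (k : E → ℝ) :
      {e ∈ G.incidentIn A v | k e = c} = {e | v ∈ G.ends e ∧ k e = c} ∩ A := by
    ext e
    simp only [incidentIn, Set.mem_ofPred_eq, Set.mem_inter_iff]
    tauto
  have diff : {e | v ∈ G.ends e ∧ g e = c} \ A = {e | v ∈ G.ends e ∧ f e = c} \ A := by
    ext e
    exact and_congr_left fun he => by rw [Set.mem_ofPred_eq, Set.mem_ofPred_eq, h he]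
  have split_f := Set.ncard_inter_add_ncard_sdiff_eq_ncard {e | v ∈ G.ends e ∧ f e = c} A
  have split_g := Set.ncard_inter_add_ncard_sdiff_eq_ncard {e | v ∈ G.ends e ∧ g e = c} A
  rw [valCount_eq_ncard, valCount_eq_ncard, inter, inter]
  rw [diff] at split_g
  omega

lemma valCount_add_of_pair (h : Set.EqOn g f Aᶜ) (hab : a ≠ b) (hA : G.incidentIn A v = {a, b}) :
    G.valCount g c v + ((if f a = c then 1 else 0) + (if f b = c then 1 else 0)) =
      G.valCount f c v + ((if g a = c then 1 else 0) + (if g b = c then 1 else 0)) := by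
  simpa only [hA, ncard_sep_pair hab] using valCount_add_ncard (G := G) (v := v) (c := c) h

lemma valCount_add_of_singleton (h : Set.EqOn g f Aᶜ) (hA : G.incidentIn A v = {a}) :
    G.valCount g c v + (if f a = c then 1 else 0) =
      G.valCount f c v + (if g a = c then 1 else 0) := by
  simpa only [hA, ncard_sep_singleton] using valCount_add_ncard (G := G) (v := v) (c := c) h

lemma isTypeO_iff (hf : HalfIntegral f) :
    G.IsTypeO f v ↔ G.valCount f 1 v = 0 ∧ G.valCount f (1 / 2) v = 0 := by
  simp only [valCount_eq_zero_iff, IsTypeO, ← forall_and]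
  refine forall₂_congr fun e _ => ?_
  rcases hf e with h | h | h <;> rw [h] <;> norm_num

lemma hasBasicType_iff (hf : HalfIntegral f) :
    G.HasBasicType f v ↔
      G.valCount f (1 / 2) v = 0 ∧ (G.valCount f 1 v = 0 ∨ G.valCount f 1 v = 2) ∨
        G.valCount f (1 / 2) v = 2 ∧ G.valCount f 1 v ≤ 1 := by
  rw [HasBasicType, isTypeO_iff hf]
  change _ ∨ (G.valCount f 1 v = 2 ∧ G.valCount f (1 / 2) v = 0) ∨
    (G.valCount f 1 v = 0 ∧ G.valCount f (1 / 2) v = 2) ∨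
    (G.valCount f 1 v = 1 ∧ G.valCount f (1 / 2) v = 2) ↔ _
  omega

lemma sum_ncard_incidentIn (hloop : G.LoopFree) (S : Finset V)
    (hA : ∀ e ∈ A, ∀ v ∈ G.ends e, v ∈ S) :
    ∑ v ∈ S, (G.incidentIn A v).ncard = 2 * A.ncard := by
  classical
  have := Fintype.ofFinite E
  have double_count := Finset.sum_card_bipartiteAbove_eq_sum_card_bipartiteBelow
    (s := S) (t := A.toFinset) (fun v e => v ∈ G.ends e)
  have row (v : V) : A.toFinset.bipartiteAbove (fun v e => v ∈ G.ends e) v =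
      (G.incidentIn A v).toFinset := by
    ext e
    rw [Set.mem_toFinset]
    simp [Finset.bipartiteAbove, incidentIn]
  have column : ∀ e ∈ A.toFinset, (S.bipartiteBelow (fun v e => v ∈ G.ends e) e).card = 2 := by
    intro e he
    have : S.bipartiteBelow (fun v e => v ∈ G.ends e) e = (G.ends e).toFinset := by
      ext v
      simpa [Finset.bipartiteBelow] using hA e (by simpa using he) v
    rw [this, Sym2.card_toFinset_of_not_isDiag _ (hloop e)]
  simp only [row, Finset.sum_congr rfl column, Finset.sum_const, smul_eq_mul] at double_count
  simp only [Set.ncard_eq_toFinset_card', double_count, mul_comm]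

end Finite

end Counting

namespace Walk

variable {W C D : G.Walk} {j k : ℕ}

/-- The vertex `v_k` of a walk, indexed by `ℕ` so that indices can be added and subtracted freely;
beyond the end it is the last vertex. -/
def vert (W : G.Walk) (k : ℕ) : V := W.verts ⟨min k W.len, by omega⟩

/-- The edge from `v_k` to `v_{k+1}` (the paper's `e_{k+1}`), indexed by `ℕ`; beyond the end it is
the last edge. -/
def edge (W : G.Walk) (k : ℕ) : E := W.edges ⟨min k (W.len - 1), by have := W.len_pos; omega⟩

/-- The set of vertices visited by a walk. -/
def vertSet (W : G.Walk) : Set V := W.vert '' Set.Iic W.len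

/-- The set of edges used by a walk. -/
def edgeSet (W : G.Walk) : Set E := W.edge '' Set.Iio W.len

lemma verts_eq_vert (i : Fin (W.len + 1)) : W.verts i = W.vert i := by
  simp [vert, Nat.min_eq_left (Nat.lt_succ_iff.1 i.isLt)]

lemma edges_eq_edge (i : Fin W.len) : W.edges i = W.edge i := by
  simp [edge, Nat.min_eq_left (Nat.le_sub_one_of_lt i.isLt)]

lemma start_eq_vert : W.start = W.vert 0 := W.verts_eq_vert 0

lemma finish_eq_vert : W.finish = W.vert W.len := W.verts_eq_vert (Fin.last W.len)

lemma ends_edge (hk : k < W.len) : G.ends (W.edge k) = s(W.vert k, W.vert (k + 1)) := by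
  have := W.valid ⟨k, hk⟩
  rwa [edges_eq_edge, verts_eq_vert, verts_eq_vert] at this

lemma vert_mem_ends_edge (hk : k < W.len) : W.vert k ∈ G.ends (W.edge k) := by
  simp [ends_edge hk]

lemma vert_succ_mem_ends_edge (hk : k < W.len) : W.vert (k + 1) ∈ G.ends (W.edge k) := by
  simp [ends_edge hk]

lemma vert_mem_vertSet (hk : k ≤ W.len) : W.vert k ∈ W.vertSet := Set.mem_image_of_mem _ hk

lemma edge_mem_edgeSet (hk : k < W.len) : W.edge k ∈ W.edgeSet := Set.mem_image_of_mem _ hk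

lemma mem_vertSet_of_mem_ends {e : E} (he : e ∈ W.edgeSet) (hv : v ∈ G.ends e) :
    v ∈ W.vertSet := by
  obtain ⟨k, hk, rfl⟩ := he
  rw [ends_edge hk, Sym2.mem_iff] at hv
  rcases hv with rfl | rfl
  · exact vert_mem_vertSet hk.le
  · exact vert_mem_vertSet hk

lemma exists_mem_ends_of_mem_vertSet (hv : v ∈ W.vertSet) : ∃ e ∈ W.edgeSet, v ∈ G.ends e := by
  obtain ⟨k, hk, rfl⟩ := hv
  cases k with
  | zero => exact ⟨_, edge_mem_edgeSet W.len_pos, vert_mem_ends_edge W.len_pos⟩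
  | succ k => exact ⟨_, edge_mem_edgeSet hk, vert_succ_mem_ends_edge hk⟩

lemma forall_edges_ne_iff {e : E} : (∀ j, e ≠ W.edges j) ↔ e ∉ W.edgeSet := by
  simp only [edges_eq_edge, edgeSet, Set.mem_image, Set.mem_Iio, not_exists, not_and,
    Fin.forall_iff, ne_comm]

lemma vertSet_subset_of_closed {S : Set V} (hmeet : (W.vertSet ∩ S).Nonempty)
    (hS : ∀ e ∈ W.edgeSet, ∀ u ∈ G.ends e, ∀ v ∈ G.ends e, u ∈ S → v ∈ S) : W.vertSet ⊆ S := by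
  have mem_iff_start : ∀ k ≤ W.len, (W.vert k ∈ S ↔ W.vert 0 ∈ S) := by
    intro k
    induction k with
    | zero => exact fun _ => Iff.rfl
    | succ k ih =>
      intro hk
      have hmem := vert_mem_ends_edge (W := W) hk
      have hmem' := vert_succ_mem_ends_edge (W := W) hk
      rw [← ih (by omega)]
      exact ⟨hS _ (edge_mem_edgeSet hk) _ hmem' _ hmem, hS _ (edge_mem_edgeSet hk) _ hmem _ hmem'⟩
  obtain ⟨_, ⟨k, hk, rfl⟩, hkS⟩ := hmeet
  rintro _ ⟨j, hj, rfl⟩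
  exact (mem_iff_start j hj).2 ((mem_iff_start k hk).1 hkS)

/-- A walk with distinct edges whose vertices are distinct, except that the last one may repeat an
earlier one: a path, a cycle, or a path followed by a cycle. -/
structure IsLasso (W : G.Walk) : Prop where
  injOn_edge : Set.InjOn W.edge (Set.Iio W.len)
  injOn_vert : Set.InjOn W.vert (Set.Iio W.len)

lemma isLasso_iff : W.IsLasso ↔
    Function.Injective W.edges ∧ Function.Injective fun i : Fin W.len => W.verts i.castSucc := by
  constructor
  · rintro ⟨he, hv⟩
    refine ⟨fun i j hij => Fin.ext (he i.isLt j.isLt ?_),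
      fun i j hij => Fin.ext (hv i.isLt j.isLt ?_)⟩
    · rwa [edges_eq_edge, edges_eq_edge] at hij
    · simpa only [verts_eq_vert, Fin.val_castSucc] using hij
  · rintro ⟨he, hv⟩
    refine ⟨fun i hi j hj hij => ?_, fun i hi j hj hij => ?_⟩
    · exact congrArg Fin.val (@he ⟨i, hi⟩ ⟨j, hj⟩ (by rwa [edges_eq_edge, edges_eq_edge]))
    · exact congrArg Fin.val (@hv ⟨i, hi⟩ ⟨j, hj⟩ (by
      simpa only [verts_eq_vert, Fin.val_castSucc] using hij))

lemma isCycle_iff : W.IsCycle ↔ W.vert 0 = W.vert W.len ∧ W.IsLasso := by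
  rw [IsCycle, isLasso_iff, start_eq_vert, finish_eq_vert]

lemma IsCycle.isLasso (hC : C.IsCycle) : C.IsLasso := (isCycle_iff.1 hC).2

lemma IsCycle.vert_zero_eq_vert_len (hC : C.IsCycle) : C.vert 0 = C.vert C.len :=
  (isCycle_iff.1 hC).1

lemma IsLasso.eq_or_eq_of_mem_ends (hW : W.IsLasso) (hj : j < W.len) (hk : k < W.len)
    (h : W.vert k ∈ G.ends (W.edge j)) :
    j = k ∨ j + 1 = k ∨ j + 1 = W.len ∧ W.vert W.len = W.vert k := by
  rw [ends_edge hj, Sym2.mem_iff] at h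
  rcases h with h | h
  · exact .inl (hW.injOn_vert hk hj h).symm
  · rcases (show j + 1 ≤ W.len from hj).lt_or_eq with hlt | heq
    · exact .inr (.inl (hW.injOn_vert hk hlt h).symm)
    · exact .inr (.inr ⟨heq, by rw [h, heq]⟩)

lemma IsLasso.incidentIn_vert_succ (hW : W.IsLasso) (hk : k + 1 < W.len)
    (hlast : W.vert W.len ≠ W.vert (k + 1)) :
    G.incidentIn W.edgeSet (W.vert (k + 1)) = {W.edge k, W.edge (k + 1)} := by
  ext e
  constructor
  · rintro ⟨⟨j, hj, rfl⟩, hmem⟩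
    rcases hW.eq_or_eq_of_mem_ends hj hk hmem with rfl | h | ⟨-, h⟩
    · exact .inr rfl
    · exact .inl (by rw [Nat.succ.inj h])
    · exact absurd h hlast
  · rintro (rfl | rfl)
    · exact ⟨edge_mem_edgeSet (by omega), vert_succ_mem_ends_edge (by omega)⟩
    · exact ⟨edge_mem_edgeSet hk, vert_mem_ends_edge hk⟩

lemma IsLasso.incidentIn_vert_zero (hW : W.IsLasso) (hlast : W.vert W.len ≠ W.vert 0) :
    G.incidentIn W.edgeSet (W.vert 0) = {W.edge 0} := by
  ext e
  constructor
  · rintro ⟨⟨j, hj, rfl⟩, hmem⟩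
    rcases hW.eq_or_eq_of_mem_ends hj W.len_pos hmem with rfl | h | ⟨-, h⟩
    · rfl
    · omega
    · exact absurd h hlast
  · rintro rfl
    exact ⟨edge_mem_edgeSet W.len_pos, vert_mem_ends_edge W.len_pos⟩

lemma incidentIn_vert_len (hlast : ∀ k < W.len, W.vert W.len ≠ W.vert k) :
    G.incidentIn W.edgeSet (W.vert W.len) = {W.edge (W.len - 1)} := by
  have hlen := W.len_pos
  ext e
  constructor
  · rintro ⟨⟨j, hj, rfl⟩, hmem⟩
    rw [ends_edge hj, Sym2.mem_iff] at hmem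
    rcases hmem with h | h
    · exact absurd h (hlast j hj)
    · rcases (show j + 1 ≤ W.len from hj).lt_or_eq with hlt | heq
      · exact absurd h (hlast _ hlt)
      · rw [← heq]; rfl
  · rintro rfl
    refine ⟨edge_mem_edgeSet (by omega), ?_⟩
    have := vert_succ_mem_ends_edge (W := W) (k := W.len - 1) (by omega)
    rwa [Nat.sub_add_cancel hlen] at this

lemma IsCycle.incidentIn_vert_zero (hC : C.IsCycle) :
    G.incidentIn C.edgeSet (C.vert 0) = {C.edge 0, C.edge (C.len - 1)} := by
  have hlen := C.len_pos
  ext e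
  constructor
  · rintro ⟨⟨j, hj, rfl⟩, hmem⟩
    rcases hC.isLasso.eq_or_eq_of_mem_ends hj C.len_pos hmem with rfl | h | ⟨h, -⟩
    · exact .inl rfl
    · omega
    · exact .inr (by rw [← h]; rfl)
  · rintro (rfl | rfl)
    · exact ⟨edge_mem_edgeSet C.len_pos, vert_mem_ends_edge C.len_pos⟩
    · refine ⟨edge_mem_edgeSet (by omega), ?_⟩
      have := vert_succ_mem_ends_edge (W := C) (k := C.len - 1) (by omega)
      rwa [Nat.sub_add_cancel hlen, ← hC.vert_zero_eq_vert_len] at this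

lemma IsCycle.one_lt_len (hC : C.IsCycle) (hloop : G.LoopFree) : 1 < C.len := by
  by_contra! hlen
  have hlen : C.len = 1 := le_antisymm hlen C.len_pos
  apply hloop (C.edge 0)
  rw [ends_edge C.len_pos, hC.vert_zero_eq_vert_len, hlen]
  rfl

lemma IsCycle.edge_zero_ne_edge_last (hC : C.IsCycle) (hloop : G.LoopFree) :
    C.edge 0 ≠ C.edge (C.len - 1) := by
  have hlen := hC.one_lt_len hloop
  intro h
  have := hC.isLasso.injOn_edge (Set.mem_Iio.2 C.len_pos)
    (Set.mem_Iio.2 (show C.len - 1 < C.len by omega)) h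
  omega

lemma IsLasso.edge_ne_edge_succ (hW : W.IsLasso) (hk : k + 1 < W.len) :
    W.edge k ≠ W.edge (k + 1) := by
  intro h
  have := hW.injOn_edge (Set.mem_Iio.2 (by omega)) hk h
  omega

lemma IsCycle.vertSet_eq_image (hC : C.IsCycle) : C.vertSet = C.vert '' Set.Iio C.len := by
  refine subset_antisymm ?_ (Set.image_mono fun k (hk : k < C.len) => hk.le)
  rintro _ ⟨k, hk, rfl⟩
  rcases (show k ≤ C.len from hk).lt_or_eq with hlt | rfl
  · exact ⟨k, hlt, rfl⟩
  · exact ⟨0, C.len_pos, hC.vert_zero_eq_vert_len⟩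

lemma IsCycle.forall_vertSet_iff (hC : C.IsCycle) {p : V → Prop} :
    (∀ v ∈ C.vertSet, p v) ↔ p (C.vert 0) ∧ ∀ k, k + 1 < C.len → p (C.vert (k + 1)) := by
  rw [hC.vertSet_eq_image, Set.forall_mem_image]
  refine ⟨fun h => ⟨h C.len_pos, fun k hk => h hk⟩, fun h k hk => ?_⟩
  cases k with
  | zero => exact h.1
  | succ k => exact h.2 k hk

lemma IsCycle.vert_succ_ne_vert_zero (hC : C.IsCycle) (hk : k + 1 < C.len) :
    C.vert (k + 1) ≠ C.vert 0 := by
  intro h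
  have := hC.isLasso.injOn_vert hk (Set.mem_Iio.2 C.len_pos) h
  omega

lemma IsCycle.incidentIn_vert_succ (hC : C.IsCycle) (hk : k + 1 < C.len) :
    G.incidentIn C.edgeSet (C.vert (k + 1)) = {C.edge k, C.edge (k + 1)} :=
  hC.isLasso.incidentIn_vert_succ hk fun h =>
    hC.vert_succ_ne_vert_zero hk (hC.vert_zero_eq_vert_len.trans h).symm

lemma IsCycle.ncard_incidentIn (hC : C.IsCycle) (hloop : G.LoopFree) :
    ∀ v ∈ C.vertSet, (G.incidentIn C.edgeSet v).ncard = 2 := by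
  refine hC.forall_vertSet_iff.2 ⟨?_, fun k hk => ?_⟩
  · rw [hC.incidentIn_vert_zero, Set.ncard_pair (hC.edge_zero_ne_edge_last hloop)]
  · rw [hC.incidentIn_vert_succ hk, Set.ncard_pair (hC.isLasso.edge_ne_edge_succ hk)]

lemma IsCycle.ncard_sep_vertSet (hC : C.IsCycle) (p : V → Prop) :
    {v ∈ C.vertSet | p v}.ncard = Nat.card {k // k < C.len ∧ p (C.vert k)} := by
  have himage : {v ∈ C.vertSet | p v} = C.vert '' {k | k < C.len ∧ p (C.vert k)} := by
    ext v
    simp only [hC.vertSet_eq_image, Set.mem_image, Set.mem_Iio, Set.mem_ofPred_eq]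
    constructor
    · rintro ⟨⟨k, hk, rfl⟩, hp⟩
      exact ⟨k, ⟨hk, hp⟩, rfl⟩
    · rintro ⟨k, ⟨hk, hp⟩, rfl⟩
      exact ⟨⟨k, hk, rfl⟩, hp⟩
  rw [himage, (hC.isLasso.injOn_vert.mono fun k hk => hk.1).ncard_image]
  exact (Nat.card_coe_set_eq _).symm

lemma IsCycle.natCard_eq_ncard_vertSet (hC : C.IsCycle) (p : V → Prop) :
    Nat.card {i : Fin C.len // p (C.verts i.castSucc)} = {v ∈ C.vertSet | p v}.ncard := by
  rw [hC.ncard_sep_vertSet]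
  simp only [verts_eq_vert, Fin.val_castSucc]
  exact Nat.card_congr
    { toFun := fun i => ⟨i.1, i.1.isLt, i.2⟩
      invFun := fun k => ⟨⟨k.1, k.2.1⟩, k.2.2⟩ }

lemma natCard_lt_and_eq_count (q : ℕ → Prop) [DecidablePred q] (n : ℕ) :
    Nat.card {k // k < n ∧ q k} = Nat.count q n := by
  let _ := Nat.CountSet.fintype q n
  exact Nat.card_eq_fintype_card.trans (Nat.count_eq_card_fintype q n).symm

lemma IsCycle.ncard_sep_vertSet_eq_count (hC : C.IsCycle) (p : V → Prop) [DecidablePred p] :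
    {v ∈ C.vertSet | p v}.ncard =
      Nat.count (fun k => p (C.vert (k + 1))) (C.len - 1) + if p (C.vert 0) then 1 else 0 := by
  rw [hC.ncard_sep_vertSet, natCard_lt_and_eq_count, ← Nat.count_succ' (p := fun k => p (C.vert k)),
    Nat.sub_add_cancel C.len_pos]

lemma natCard_verts_le_eq_count (p : V → Prop) [DecidablePred p] (hj : j < W.len) :
    Nat.card {m : Fin W.len // 1 ≤ m.val ∧ m.val ≤ j ∧ p (W.verts m.castSucc)} =
      Nat.count (fun k => p (W.vert (k + 1))) j := by
  rw [← natCard_lt_and_eq_count]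
  simp only [verts_eq_vert, Fin.val_castSucc]
  exact Nat.card_congr
    { toFun := fun m => ⟨m.1 - 1, by have := m.2; omega, by
        rw [Nat.sub_add_cancel m.2.1]
        exact m.2.2.2⟩
      invFun := fun k => ⟨⟨k + 1, by have := k.2.1; omega⟩, by simp, k.2.1, k.2.2⟩
      left_inv := fun m => Subtype.ext (Fin.ext (Nat.sub_add_cancel m.2.1)) }

/-- The initial part `v₀, …, v_h` of a walk. -/
def take (W : G.Walk) (h : ℕ) (hpos : 0 < h) (hle : h ≤ W.len) : G.Walk where
  len := h
  len_pos := hpos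
  verts i := W.vert i
  edges i := W.edge i
  valid i := ends_edge (i.isLt.trans_le hle)

/-- The final part `v_h, …, v_l` of a walk. -/
def drop (W : G.Walk) (h : ℕ) (hlt : h < W.len) : G.Walk where
  len := W.len - h
  len_pos := Nat.sub_pos_of_lt hlt
  verts i := W.vert (h + i)
  edges i := W.edge (h + i)
  valid i := ends_edge (Nat.add_lt_of_lt_sub' i.isLt)

variable {h : ℕ}

lemma vert_take (hpos : 0 < h) (hle : h ≤ W.len) (hk : k ≤ h) :
    (W.take h hpos hle).vert k = W.vert k := by
  simp [vert, take, hk]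

lemma edge_take (hpos : 0 < h) (hle : h ≤ W.len) (hk : k < h) :
    (W.take h hpos hle).edge k = W.edge k := by
  have : min k (h - 1) = k := by omega
  simp [edge, take, this]

lemma vert_drop (hlt : h < W.len) (hk : k ≤ W.len - h) :
    (W.drop h hlt).vert k = W.vert (h + k) := by
  simp [vert, drop, hk]

lemma edge_drop (hlt : h < W.len) (hk : k < W.len - h) :
    (W.drop h hlt).edge k = W.edge (h + k) := by
  have : min k (W.len - h - 1) = k := by omega
  simp [edge, drop, this]

lemma edgeSet_take (hpos : 0 < h) (hle : h ≤ W.len) :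
    (W.take h hpos hle).edgeSet = W.edge '' Set.Iio h :=
  Set.image_congr fun _ hk => edge_take hpos hle hk

lemma edgeSet_drop (hlt : h < W.len) :
    (W.drop h hlt).edgeSet = W.edge '' Set.Ico h W.len := by
  ext e
  constructor
  · rintro ⟨k, hk, rfl⟩
    have hk : k < W.len - h := hk
    exact ⟨h + k, ⟨by omega, by omega⟩, (edge_drop hlt hk).symm⟩
  · rintro ⟨j, ⟨hhj, hj⟩, rfl⟩
    refine ⟨j - h, show j - h < W.len - h by omega, ?_⟩
    rw [edge_drop hlt (by omega), Nat.add_sub_cancel' hhj]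

lemma edgeSet_take_union_edgeSet_drop (hpos : 0 < h) (hlt : h < W.len) :
    (W.take h hpos hlt.le).edgeSet ∪ (W.drop h hlt).edgeSet = W.edgeSet := by
  rw [edgeSet_take, edgeSet_drop, ← Set.image_union, Set.Iio_union_Ico_eq_Iio hlt.le, edgeSet]

lemma IsLasso.take (hW : W.IsLasso) (hpos : 0 < h) (hle : h ≤ W.len) :
    (W.take h hpos hle).IsLasso := by
  refine ⟨fun j hj k hk hjk => ?_, fun j hj k hk hjk => ?_⟩
  · rw [edge_take hpos hle hj, edge_take hpos hle hk] at hjk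
    exact hW.injOn_edge (lt_of_lt_of_le hj hle) (lt_of_lt_of_le hk hle) hjk
  · rw [vert_take hpos hle (le_of_lt hj), vert_take hpos hle (le_of_lt hk)] at hjk
    exact hW.injOn_vert (lt_of_lt_of_le hj hle) (lt_of_lt_of_le hk hle) hjk

lemma IsLasso.isCycle_drop (hW : W.IsLasso) (hlt : h < W.len)
    (hclosed : W.vert W.len = W.vert h) : (W.drop h hlt).IsCycle := by
  refine isCycle_iff.2 ⟨?_, fun j hj k hk hjk => ?_, fun j hj k hk hjk => ?_⟩
  · have hlen : (W.drop h hlt).len = W.len - h := rfl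
    rw [vert_drop hlt (Nat.zero_le _), hlen, vert_drop hlt le_rfl, Nat.add_sub_cancel' hlt.le,
      hclosed, add_zero]
  · have hj : j < W.len - h := hj
    have hk : k < W.len - h := hk
    rw [edge_drop hlt hj, edge_drop hlt hk] at hjk
    exact Nat.add_left_cancel (hW.injOn_edge (Nat.add_lt_of_lt_sub' hj)
      (Nat.add_lt_of_lt_sub' hk) hjk)
  · have hj : j < W.len - h := hj
    have hk : k < W.len - h := hk
    rw [vert_drop hlt hj.le, vert_drop hlt hk.le] at hjk
    exact Nat.add_left_cancel (hW.injOn_vert (Nat.add_lt_of_lt_sub' hj)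
      (Nat.add_lt_of_lt_sub' hk) hjk)

end Walk

section Basic

/-- A half-integral cycle of `f`: all its edges have value `1/2`. -/
structure IsHalfCycle (G : Multigraph V E) (f : E → ℝ) (D : G.Walk) : Prop where
  isCycle : D.IsCycle
  eq_half : ∀ e ∈ D.edgeSet, f e = 1 / 2

variable {D : G.Walk} {A : Set E} {S : Set V}

lemma isBasicSCyclePacking_iff : G.IsBasicSCyclePacking s f ↔
    HalfIntegral f ∧ (∀ e, s ∈ G.ends e → f e = 0 ∨ f e = 1) ∧
      (∀ v, v ≠ s → G.HasBasicType f v) ∧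
      ∀ D, G.IsHalfCycle f D → Odd {v ∈ D.vertSet | G.IsTypeT f v}.ncard := by
  have half_iff (D : G.Walk) : (∀ j, f (D.edges j) = 1 / 2) ↔ ∀ e ∈ D.edgeSet, f e = 1 / 2 := by
    simp only [Walk.edges_eq_edge, Fin.forall_iff, Walk.edgeSet, Set.forall_mem_image, Set.mem_Iio]
  refine and_congr_right' (and_congr_right' (and_congr_right' (forall_congr' fun D => ?_)))
  refine ⟨fun h hD => ?_, fun h hD hhalf => ?_⟩
  · rw [← hD.isCycle.natCard_eq_ncard_vertSet]
    exact h hD.isCycle ((half_iff D).2 hD.eq_half)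
  · rw [hD.natCard_eq_ncard_vertSet]
    exact h ⟨hD, (half_iff D).1 hhalf⟩

lemma IsBasicSCyclePacking.halfIntegral (hf : G.IsBasicSCyclePacking s f) : HalfIntegral f := hf.1

lemma IsBasicSCyclePacking.eq_zero_or_eq_one {e : E} (hf : G.IsBasicSCyclePacking s f)
    (he : s ∈ G.ends e) : f e = 0 ∨ f e = 1 := hf.2.1 e he

lemma IsBasicSCyclePacking.hasBasicType (hf : G.IsBasicSCyclePacking s f) (hv : v ≠ s) :
    G.HasBasicType f v := hf.2.2.1 v hv

lemma IsBasicSCyclePacking.odd_ncard_isTypeT (hf : G.IsBasicSCyclePacking s f)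
    (hD : G.IsHalfCycle f D) : Odd {v ∈ D.vertSet | G.IsTypeT f v}.ncard :=
  (isBasicSCyclePacking_iff.1 hf).2.2.2 D hD

lemma valCount_half_eq_zero [Finite E] (h : ∀ e, v ∈ G.ends e → f e = 0 ∨ f e = 1) :
    G.valCount f (1 / 2) v = 0 := by
  refine valCount_eq_zero_iff.2 fun e he => ?_
  rcases h e he with h | h <;> rw [h] <;> norm_num

lemma IsHalfCycle.valCount_ne_zero [Finite E] (hD : G.IsHalfCycle f D) (hv : v ∈ D.vertSet) :
    G.valCount f (1 / 2) v ≠ 0 := by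
  obtain ⟨e, he, hve⟩ := Walk.exists_mem_ends_of_mem_vertSet hv
  exact fun h => valCount_eq_zero_iff.1 h e hve (hD.eq_half e he)

lemma IsBasicSCyclePacking.of_eqOn_compl [Finite E] (hf : G.IsBasicSCyclePacking s f)
    (hgf : Set.EqOn g f Aᶜ) (hAS : ∀ e ∈ A, ∀ v ∈ G.ends e, v ∈ S)
    (hg : HalfIntegral g) (hs : ∀ e ∈ A, s ∈ G.ends e → g e = 0 ∨ g e = 1)
    (htype : ∀ v ∈ S, v ≠ s → G.HasBasicType g v)
    (hodd : ∀ D, G.IsHalfCycle g D → (D.vertSet ∩ S).Nonempty →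
      Odd {v ∈ D.vertSet | G.IsTypeT g v}.ncard) :
    G.IsBasicSCyclePacking s g := by
  have valCount_eq {v : V} (hv : v ∉ S) (c : ℝ) : G.valCount g c v = G.valCount f c v :=
    valCount_congr fun e he => hgf fun heA => hv (hAS e heA v he)
  refine isBasicSCyclePacking_iff.2 ⟨hg, fun e he => ?_, fun v hv => ?_, fun D hD => ?_⟩
  · by_cases heA : e ∈ A
    · exact hs e heA he
    · rw [hgf heA]
      exact hf.eq_zero_or_eq_one he
  · by_cases hvS : v ∈ S
    · exact htype v hvS hv
    · rw [hasBasicType_iff hg, valCount_eq hvS, valCount_eq hvS, ← hasBasicType_iff hf.halfIntegral]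
      exact hf.hasBasicType hv
  · by_cases hDS : (D.vertSet ∩ S).Nonempty
    · exact hodd D hD hDS
    · have avoids_S : ∀ v ∈ D.vertSet, v ∉ S := fun v hvD hvS => hDS ⟨v, hvD, hvS⟩
      have half_f : G.IsHalfCycle f D := by
        refine ⟨hD.isCycle, fun e he => ?_⟩
        rw [← hD.eq_half e he]
        obtain ⟨v, hv⟩ : ∃ v, v ∈ G.ends e := ⟨_, Sym2.out_fst_mem _⟩
        exact (hgf fun heA =>
          avoids_S v (Walk.mem_vertSet_of_mem_ends he hv) (hAS e heA v hv)).symm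
      convert hf.odd_ncard_isTypeT half_f using 2
      ext v
      refine and_congr_right fun hv => and_congr ?_ ?_
      · exact Eq.congr_left (valCount_eq (avoids_S v hv) 1)
      · exact Eq.congr_left (valCount_eq (avoids_S v hv) (1 / 2))

lemma basicSize_eq_add [Fintype E] (hgf : Set.EqOn g f Aᶜ)
    (h : ∀ e ∈ G.incidentIn A s, g e = f e + 1) :
    G.basicSize s g = G.basicSize s f + (G.incidentIn A s).ncard / 2 := by
  classical
  have indicator_eq (e : E) : Set.indicator {e | s ∈ G.ends e} g e =
      Set.indicator {e | s ∈ G.ends e} f e + Set.indicator (G.incidentIn A s) 1 e := by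
    by_cases hs : s ∈ G.ends e <;> by_cases hA : e ∈ A
    · simp [incidentIn, hs, hA, h e ⟨hA, hs⟩]
    · simp [incidentIn, hs, hA, hgf hA]
    all_goals simp [incidentIn, hs]
  have sum_indicator : ∑ e, Set.indicator (G.incidentIn A s) (1 : E → ℝ) e =
      (G.incidentIn A s).ncard := by
    simp [Set.indicator_apply, Set.ncard_eq_toFinset_card']
  simp only [basicSize, indicator_eq, Finset.sum_add_distrib, sum_indicator]
  ring

end Basic

section Alternating

variable {W P C D : G.Walk} {A B : Set E} {a b e : E} {k : ℕ}

open Classical in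
/-- The function `f` complemented on the edge set `A`: the value `x` becomes `1 - x` there. -/
noncomputable def complementOn (A : Set E) (f : E → ℝ) : E → ℝ := A.piecewise (1 - f) f

lemma complementOn_of_mem (he : e ∈ A) : complementOn A f e = 1 - f e := by
  classical exact Set.piecewise_eq_of_mem A (1 - f) f he

lemma complementOn_eqOn_compl : Set.EqOn (complementOn A f) f Aᶜ := by
  classical exact Set.piecewise_eqOn_compl A (1 - f) f

lemma eq_complementOn (hA : ∀ e ∈ A, g e = 1 - f e) (hgf : Set.EqOn g f Aᶜ) :
    g = complementOn A f := by
  funext e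
  by_cases he : e ∈ A
  · rw [hA e he, complementOn_of_mem he]
  · rw [hgf he, complementOn_eqOn_compl he]

lemma eqOn_complementOn (hA : ∀ e ∈ A, g e = 1 - f e) (hgf : Set.EqOn g f (A ∪ B)ᶜ) :
    Set.EqOn g (complementOn A f) Bᶜ := by
  intro e he
  by_cases heA : e ∈ A
  · rw [hA e heA, complementOn_of_mem heA]
  · rw [hgf fun h => h.elim heA he, complementOn_eqOn_compl heA]

lemma complementOn_eq_zero_or_eq_one (h : f e = 0 ∨ f e = 1) :
    complementOn A f e = 0 ∨ complementOn A f e = 1 := by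
  by_cases he : e ∈ A
  · rw [complementOn_of_mem he]
    rcases h with h | h <;> rw [h] <;> norm_num
  · rwa [complementOn_eqOn_compl he]

lemma HalfIntegral.complementOn (hf : HalfIntegral f) : HalfIntegral (complementOn A f) := by
  intro e
  by_cases he : e ∈ A
  · rw [complementOn_of_mem he]
    rcases hf e with h | h | h <;> rw [h] <;> norm_num
  · rw [complementOn_eqOn_compl he]
    exact hf e

lemma HalfIntegral.of_eqOn_compl (hf : HalfIntegral f) (hgf : Set.EqOn g f Aᶜ)
    (hg : ∀ e ∈ A, g e = 0 ∨ g e = 1 / 2 ∨ g e = 1) : HalfIntegral g := by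
  intro e
  by_cases he : e ∈ A
  · exact hg e he
  · rw [hgf he]
    exact hf e

/-- The requirement on a vertex `v` of an augmenting walk that is entered through `a` and left
through `b`. -/
def IsPassable (G : Multigraph V E) (f : E → ℝ) (v : V) (a b : E) : Prop :=
  G.IsTypeO f v ∨ G.IsTypeI f v ∧ (f a = 1 ∨ f b = 1)

section Finite

variable [Finite E]

lemma eq_zero_or_eq_one_of_valCount_half (hf : HalfIntegral f) (h : G.valCount f (1 / 2) v = 0)
    (he : v ∈ G.ends e) : f e = 0 ∨ f e = 1 :=
  (hf e).imp_right (Or.resolve_left · (valCount_eq_zero_iff.1 h e he))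

lemma IsPassable.valCount_half (h : G.IsPassable f v a b) : G.valCount f (1 / 2) v = 0 := by
  rcases h with h | h
  · exact valCount_eq_zero_iff.2 fun e he => by rw [h e he]; norm_num
  · exact h.1.2

lemma IsPassable.valCount_one (hf : HalfIntegral f) (h : G.IsPassable f v a b)
    (ha : v ∈ G.ends a) (hb : v ∈ G.ends b) :
    G.valCount f 1 v = 0 ∧ f a = 0 ∧ f b = 0 ∨ G.valCount f 1 v = 2 ∧ (f a = 1 ∨ f b = 1) :=
  h.imp (fun hO => ⟨((isTypeO_iff hf).1 hO).1, hO a ha, hO b hb⟩) fun hI => ⟨hI.1.1, hI.2⟩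

lemma IsPassable.valCount_complementOn (hf : HalfIntegral f) (h : G.IsPassable f v a b)
    (hab : a ≠ b) (hA : G.incidentIn A v = {a, b}) :
    G.valCount (complementOn A f) (1 / 2) v = 0 ∧
      (G.valCount (complementOn A f) 1 v = 0 ∨ G.valCount (complementOn A f) 1 v = 2) := by
  have haA : a ∈ G.incidentIn A v := hA ▸ .inl rfl
  have hbA : b ∈ G.incidentIn A v := hA ▸ .inr rfl
  have half := valCount_add_of_pair (c := 1 / 2) (complementOn_eqOn_compl (f := f)) hab hA
  have one := valCount_add_of_pair (c := 1) (complementOn_eqOn_compl (f := f)) hab hA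
  have h_half := h.valCount_half
  have ha := eq_zero_or_eq_one_of_valCount_half hf h_half haA.2
  have hb := eq_zero_or_eq_one_of_valCount_half hf h_half hbA.2
  rw [complementOn_of_mem haA.1, complementOn_of_mem hbA.1] at half one
  rcases h.valCount_one hf haA.2 hbA.2 with ⟨h_one, ha, hb⟩ | ⟨h_one, hab_one⟩
  · norm_num [ha, hb, h_half, h_one] at half one
    omega
  · rcases ha with ha | ha <;> rcases hb with hb | hb <;>
      norm_num [ha, hb, h_half, h_one] at half one hab_one <;> omega

end Finite

/-- A walk along which `f` can be complemented without violating the degree conditions at its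
interior vertices: an augmenting walk without the conditions on its last vertex. -/
structure IsAlternating (G : Multigraph V E) (s : V) (f : E → ℝ) (P : G.Walk) : Prop where
  isLasso : P.IsLasso
  vert_zero : P.vert 0 = s
  edge_zero : f (P.edge 0) = 0
  isPassable : ∀ k, k + 1 < P.len → G.IsPassable f (P.vert (k + 1)) (P.edge k) (P.edge (k + 1))

lemma IsAlternating.take {h : ℕ} (hW : G.IsAlternating s f W) (hpos : 0 < h) (hle : h ≤ W.len) :
    G.IsAlternating s f (W.take h hpos hle) := by
  refine ⟨hW.isLasso.take hpos hle, ?_, ?_, fun k hk => ?_⟩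
  · rw [Walk.vert_take hpos hle hpos.le, hW.vert_zero]
  · rw [Walk.edge_take hpos hle hpos, hW.edge_zero]
  · have hk : k + 1 < h := hk
    rw [Walk.vert_take hpos hle hk.le, Walk.edge_take hpos hle (by omega),
      Walk.edge_take hpos hle hk]
    exact hW.isPassable k (by omega)

variable [Finite E]

lemma IsAlternating.valCount_half_vert (hP : G.IsAlternating s f P)
    (hf : G.IsBasicSCyclePacking s f) (hk : k < P.len) : G.valCount f (1 / 2) (P.vert k) = 0 := by
  cases k with
  | zero => rw [hP.vert_zero, valCount_half_eq_zero fun e => hf.eq_zero_or_eq_one]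
  | succ k => exact (hP.isPassable k hk).valCount_half

lemma IsAlternating.eq_zero_or_eq_one (hP : G.IsAlternating s f P)
    (hf : G.IsBasicSCyclePacking s f) (he : e ∈ P.edgeSet) : f e = 0 ∨ f e = 1 := by
  obtain ⟨k, hk, rfl⟩ := he
  exact eq_zero_or_eq_one_of_valCount_half hf.halfIntegral (hP.valCount_half_vert hf hk)
    (Walk.vert_mem_ends_edge hk)

lemma IsAlternating.valCount_complementOn (hP : G.IsAlternating s f P) (hf : HalfIntegral f)
    (hk : k + 1 < P.len) (hlast : P.vert P.len ≠ P.vert (k + 1)) :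
    G.valCount (complementOn P.edgeSet f) (1 / 2) (P.vert (k + 1)) = 0 ∧
      (G.valCount (complementOn P.edgeSet f) 1 (P.vert (k + 1)) = 0 ∨
        G.valCount (complementOn P.edgeSet f) 1 (P.vert (k + 1)) = 2) :=
  (hP.isPassable k hk).valCount_complementOn hf (hP.isLasso.edge_ne_edge_succ hk)
    (hP.isLasso.incidentIn_vert_succ hk hlast)

end Alternating

section ClosedAtRoot

variable {W : G.Walk}

lemma IsAlternating.isCycle (hW : G.IsAlternating s f W) (hclosed : W.vert W.len = s) :
    W.IsCycle :=
  Walk.isCycle_iff.2 ⟨hW.vert_zero.trans hclosed.symm, hW.isLasso⟩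

theorem IsAlternating.isBasicSCyclePacking_complementOn [Finite E] (hW : G.IsAlternating s f W)
    (hf : G.IsBasicSCyclePacking s f) (hclosed : W.vert W.len = s) :
    G.IsBasicSCyclePacking s (complementOn W.edgeSet f) := by
  set g := complementOn W.edgeSet f
  have integral_s : ∀ e, s ∈ G.ends e → g e = 0 ∨ g e = 1 :=
    fun e he => complementOn_eq_zero_or_eq_one (hf.eq_zero_or_eq_one he)
  have half_s : G.valCount g (1 / 2) s = 0 := valCount_half_eq_zero integral_s
  have counts : ∀ v ∈ W.vertSet, v ≠ s → G.valCount g (1 / 2) v = 0 ∧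
      (G.valCount g 1 v = 0 ∨ G.valCount g 1 v = 2) := by
    refine (hW.isCycle hclosed).forall_vertSet_iff.2
      ⟨fun h => absurd hW.vert_zero h, fun k hk hne => ?_⟩
    exact hW.valCount_complementOn hf.halfIntegral hk (hclosed.trans_ne hne.symm)
  refine hf.of_eqOn_compl (S := W.vertSet) complementOn_eqOn_compl
    (fun e he v => Walk.mem_vertSet_of_mem_ends he) hf.halfIntegral.complementOn
    (fun e _ => integral_s e) (fun v hv hvs => ?_) ?_
  · exact (hasBasicType_iff hf.halfIntegral.complementOn).2 (.inl (counts v hv hvs))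
  · rintro D hD ⟨v, hvD, hvW⟩
    refine absurd ?_ (hD.valCount_ne_zero hvD)
    rcases eq_or_ne v s with rfl | hvs
    · exact half_s
    · exact (counts v hvW hvs).1

theorem IsAlternating.basicSize_complementOn [Fintype E] (hW : G.IsAlternating s f W)
    (hloop : G.LoopFree) (hclosed : W.vert W.len = s) (hlast : f (W.edge (W.len - 1)) = 0) :
    G.basicSize s (complementOn W.edgeSet f) = G.basicSize s f + 1 := by
  have hcycle := hW.isCycle hclosed
  have hroot : G.incidentIn W.edgeSet s = {W.edge 0, W.edge (W.len - 1)} := by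
    rw [← hW.vert_zero, hcycle.incidentIn_vert_zero]
  rw [basicSize_eq_add complementOn_eqOn_compl, hroot,
    Set.ncard_pair (hcycle.edge_zero_ne_edge_last hloop)]
  · norm_num
  · intro e he
    rw [complementOn_of_mem he.1]
    rw [hroot] at he
    rcases he with rfl | rfl
    · rw [hW.edge_zero]; norm_num
    · rw [hlast]; norm_num

end ClosedAtRoot

section Lollipop

variable {P C : G.Walk} {A B : Set E} {e : E} {k : ℕ}

/-- A path `P` together with a cycle `C` attached to its last vertex and otherwise disjoint from
it. -/
structure IsLollipop (P C : G.Walk) : Prop where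
  isCycle : C.IsCycle
  vert_zero : C.vert 0 = P.vert P.len
  vert_notMem : ∀ k < P.len, P.vert k ∉ C.vertSet

lemma IsLollipop.vert_len_mem (h : IsLollipop P C) : P.vert P.len ∈ C.vertSet :=
  h.vert_zero ▸ Walk.vert_mem_vertSet (Nat.zero_le _)

lemma IsLollipop.vert_len_ne (h : IsLollipop P C) (hk : k < P.len) : P.vert P.len ≠ P.vert k :=
  fun heq => h.vert_notMem k hk (heq ▸ h.vert_len_mem)

lemma IsLollipop.disjoint_edgeSet (h : IsLollipop P C) : Disjoint P.edgeSet C.edgeSet := by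
  rw [Set.disjoint_left]
  rintro _ ⟨k, hk, rfl⟩ hC
  exact h.vert_notMem k hk (Walk.mem_vertSet_of_mem_ends hC (Walk.vert_mem_ends_edge hk))

lemma IsLollipop.eq_vert_zero (h : IsLollipop P C) (hvP : v ∈ P.vertSet) (hvC : v ∈ C.vertSet) :
    v = C.vert 0 := by
  obtain ⟨k, hk, rfl⟩ := hvP
  rcases (show k ≤ P.len from hk).lt_or_eq with hlt | rfl
  · exact absurd hvC (h.vert_notMem k hlt)
  · exact h.vert_zero.symm

lemma IsLollipop.vert_zero_mem_ends (h : IsLollipop P C) :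
    C.vert 0 ∈ G.ends (P.edge (P.len - 1)) := by
  have := Walk.vert_succ_mem_ends_edge (Nat.sub_lt P.len_pos Nat.one_pos)
  rwa [Nat.sub_add_cancel P.len_pos, ← h.vert_zero] at this

lemma IsLollipop.complementOn_eq (h : IsLollipop P C) (he : e ∈ C.edgeSet) :
    complementOn P.edgeSet f e = f e :=
  complementOn_eqOn_compl (Set.disjoint_right.1 h.disjoint_edgeSet he)

lemma incidentIn_union_edgeSet (hv : v ∉ C.vertSet) :
    G.incidentIn (A ∪ C.edgeSet) v = G.incidentIn A v := by
  ext e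
  exact and_congr_left fun he => or_iff_left fun hC => hv (Walk.mem_vertSet_of_mem_ends hC he)

lemma eqOn_compl_union (hgf : Set.EqOn g (complementOn A f) Bᶜ) : Set.EqOn g f (A ∪ B)ᶜ := by
  intro e he
  rw [hgf fun h => he (.inr h), complementOn_eqOn_compl fun h => he (.inl h)]

lemma IsLollipop.valCount_complementOn_of_ne (h : IsLollipop P C) (hv : v ∈ C.vertSet)
    (hne : v ≠ C.vert 0) (c : ℝ) :
    G.valCount (complementOn P.edgeSet f) c v = G.valCount f c v :=
  valCount_congr fun _ he => complementOn_eqOn_compl fun heP =>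
    hne (h.eq_vert_zero (Walk.mem_vertSet_of_mem_ends heP he) hv)

lemma IsLollipop.valCount_complementOn_vert_zero [Finite E] (h : IsLollipop P C) (c : ℝ) :
    G.valCount (complementOn P.edgeSet f) c (C.vert 0) +
        (if f (P.edge (P.len - 1)) = c then 1 else 0) =
      G.valCount f c (C.vert 0) + (if 1 - f (P.edge (P.len - 1)) = c then 1 else 0) := by
  have incident : G.incidentIn P.edgeSet (C.vert 0) = {P.edge (P.len - 1)} := by
    rw [h.vert_zero, Walk.incidentIn_vert_len fun k => h.vert_len_ne]
  have hmem : P.edge (P.len - 1) ∈ P.edgeSet :=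
    Walk.edge_mem_edgeSet (Nat.sub_lt P.len_pos Nat.one_pos)
  rw [← complementOn_of_mem hmem]
  exact valCount_add_of_singleton complementOn_eqOn_compl incident

lemma IsLollipop.isBasicSCyclePacking [Finite E] (hPC : IsLollipop P C)
    (hP : G.IsAlternating s f P) (hgf : Set.EqOn g (complementOn P.edgeSet f) C.edgeSetᶜ)
    (hf : G.IsBasicSCyclePacking s f) (hg : HalfIntegral g)
    (htype : ∀ v ∈ C.vertSet, G.HasBasicType g v)
    (hodd : ∀ D, G.IsHalfCycle g D → (D.vertSet ∩ C.vertSet).Nonempty →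
      Odd {v ∈ D.vertSet | G.IsTypeT g v}.ncard) :
    G.IsBasicSCyclePacking s g := by
  have s_notMem : s ∉ C.vertSet := hP.vert_zero ▸ hPC.vert_notMem 0 P.len_pos
  have eq_off_C {v : V} (hv : v ∉ C.vertSet) (e : E) (he : v ∈ G.ends e) :
      g e = complementOn P.edgeSet f e :=
    hgf fun heC => hv (Walk.mem_vertSet_of_mem_ends heC he)
  have integral_s : ∀ e, s ∈ G.ends e → g e = 0 ∨ g e = 1 := fun e he => by
    rw [eq_off_C s_notMem e he]
    exact complementOn_eq_zero_or_eq_one (hf.eq_zero_or_eq_one he)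
  have counts : ∀ v ∈ P.vertSet, v ∉ C.vertSet → v ≠ s → G.valCount g (1 / 2) v = 0 ∧
      (G.valCount g 1 v = 0 ∨ G.valCount g 1 v = 2) := by
    rintro _ ⟨k, hk, rfl⟩ hkC hks
    have hk : k < P.len := lt_of_le_of_ne hk fun h => hkC (h ▸ hPC.vert_len_mem)
    rw [valCount_congr (eq_off_C hkC), valCount_congr (eq_off_C hkC)]
    cases k with
    | zero => exact absurd hP.vert_zero hks
    | succ k => exact hP.valCount_complementOn hf.halfIntegral hk (hPC.vert_len_ne hk)
  refine hf.of_eqOn_compl (S := P.vertSet ∪ C.vertSet) (eqOn_compl_union hgf) ?_ hg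
    (fun e _ => integral_s e) (fun v hv hvs => ?_) ?_
  · exact fun e he v hv => he.imp (Walk.mem_vertSet_of_mem_ends · hv)
      (Walk.mem_vertSet_of_mem_ends · hv)
  · by_cases hvC : v ∈ C.vertSet
    · exact htype v hvC
    · exact (hasBasicType_iff hg).2 (.inl (counts v (hv.resolve_right hvC) hvC hvs))
  · rintro D hD ⟨v, hvD, hv⟩
    by_cases hvC : v ∈ C.vertSet
    · exact hodd D hD ⟨v, hvD, hvC⟩
    refine absurd ?_ (hD.valCount_ne_zero hvD)
    rcases eq_or_ne v s with rfl | hvs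
    · exact valCount_half_eq_zero integral_s
    · exact (counts v (hv.resolve_right hvC) hvC hvs).1

lemma IsLollipop.basicSize_eq [Fintype E] (hPC : IsLollipop P C) (hP : G.IsAlternating s f P)
    (hgf : Set.EqOn g (complementOn P.edgeSet f) C.edgeSetᶜ) :
    G.basicSize s g = G.basicSize s f + 1 / 2 := by
  have s_notMem : s ∉ C.vertSet := hP.vert_zero ▸ hPC.vert_notMem 0 P.len_pos
  have incident_s : G.incidentIn (P.edgeSet ∪ C.edgeSet) s = {P.edge 0} := by
    rw [incidentIn_union_edgeSet s_notMem, ← hP.vert_zero,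
      hP.isLasso.incidentIn_vert_zero (hPC.vert_len_ne P.len_pos)]
  have edge_zero_mem : P.edge 0 ∈ P.edgeSet := Walk.edge_mem_edgeSet P.len_pos
  rw [basicSize_eq_add (eqOn_compl_union hgf), incident_s, Set.ncard_singleton, Nat.cast_one]
  rw [incident_s]
  rintro _ rfl
  rw [hgf (Set.disjoint_left.1 hPC.disjoint_edgeSet edge_zero_mem),
    complementOn_of_mem edge_zero_mem, hP.edge_zero]
  norm_num

end Lollipop

section HalvedCycle

variable {C D P : G.Walk} {k : ℕ} {e : E} {x : V} [Finite E]

lemma IsHalfCycle.mem_edgeSet (hC : G.IsHalfCycle f C) (hloop : G.LoopFree) (hv : v ∈ C.vertSet)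
    (hcount : G.valCount f (1 / 2) v = 2) (he : v ∈ G.ends e) (hfe : f e = 1 / 2) :
    e ∈ C.edgeSet := by
  have hsub : G.incidentIn C.edgeSet v ⊆ {e | v ∈ G.ends e ∧ f e = 1 / 2} :=
    fun e he => ⟨he.2, hC.eq_half e he.1⟩
  have heq := Set.eq_of_subset_of_ncard_le hsub
    (by rw [hC.isCycle.ncard_incidentIn hloop v hv, ← valCount_eq_ncard, hcount])
  exact (heq.ge ⟨he, hfe⟩).1

lemma IsHalfCycle.vertSet_eq (hC : G.IsHalfCycle f C) (hD : G.IsHalfCycle f D)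
    (hloop : G.LoopFree) (hcount : ∀ v ∈ C.vertSet, G.valCount f (1 / 2) v = 2)
    (hmeet : (D.vertSet ∩ C.vertSet).Nonempty) : D.vertSet = C.vertSet := by
  have hsub : D.vertSet ⊆ C.vertSet := by
    refine Walk.vertSet_subset_of_closed hmeet fun e he u hu v hv huC => ?_
    exact Walk.mem_vertSet_of_mem_ends
      (hC.mem_edgeSet hloop huC (hcount u huC) hu (hD.eq_half e he)) hv
  refine hsub.antisymm ?_
  refine Walk.vertSet_subset_of_closed (Set.inter_comm _ _ ▸ hmeet) fun e he u hu v hv huD => ?_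
  exact Walk.mem_vertSet_of_mem_ends
    (hD.mem_edgeSet hloop huD (hcount u (hsub huD)) hu (hC.eq_half e he)) hv

lemma IsHalfCycle.valCount_half (hC : G.IsHalfCycle g C) (hloop : G.LoopFree)
    (hgf : Set.EqOn g f C.edgeSetᶜ) (hv : v ∈ C.vertSet) (hf : G.valCount f (1 / 2) v = 0) :
    G.valCount g (1 / 2) v = 2 := by
  have hf_empty : {e ∈ G.incidentIn C.edgeSet v | f e = 1 / 2} = ∅ :=
    Set.sep_eq_empty_iff_mem_false.2 fun e he => valCount_eq_zero_iff.1 hf e he.2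
  have hg_all : {e ∈ G.incidentIn C.edgeSet v | g e = 1 / 2} = G.incidentIn C.edgeSet v :=
    Set.sep_eq_self_iff_mem_true.2 fun e he => hC.eq_half e he.1
  have hcount := valCount_add_ncard (G := G) (v := v) (c := 1 / 2) hgf
  rwa [hf_empty, hg_all, hf, hC.isCycle.ncard_incidentIn hloop v hv, Set.ncard_empty] at hcount

lemma IsHalfCycle.valCount_one_add (hC : G.IsHalfCycle g C) (hgf : Set.EqOn g f C.edgeSetᶜ) :
    G.valCount g 1 v + (G.incidentIn {e ∈ C.edgeSet | f e = 1} v).ncard = G.valCount f 1 v := by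
  have hf_eq : {e ∈ G.incidentIn C.edgeSet v | f e = 1} =
      G.incidentIn {e ∈ C.edgeSet | f e = 1} v :=
    Set.ext fun e => and_right_comm
  have hg_empty : {e ∈ G.incidentIn C.edgeSet v | g e = 1} = ∅ :=
    Set.sep_eq_empty_iff_mem_false.2 fun e he => by rw [hC.eq_half e he.1]; norm_num
  have hcount := valCount_add_ncard (G := G) (v := v) (c := 1) hgf
  rwa [hf_eq, hg_empty, Set.ncard_empty, add_zero] at hcount

/-- By the handshake lemma, the numbers of edges of value `1` at the vertices of `C` add up to the
same parity for `f` and for `g`. -/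
lemma IsHalfCycle.odd_ncard_odd (hC : G.IsHalfCycle g C) (hloop : G.LoopFree)
    (hgf : Set.EqOn g f C.edgeSetᶜ) (hx : x ∈ C.vertSet) (hodd : Odd (G.valCount f 1 x))
    (heven : ∀ v ∈ C.vertSet, v ≠ x → Even (G.valCount f 1 v)) :
    Odd {v ∈ C.vertSet | Odd (G.valCount g 1 v)}.ncard := by
  classical
  have hfin : C.vertSet.Finite := (Set.finite_Iic _).image _
  obtain ⟨S, hS⟩ : ∃ S : Finset V, ↑S = C.vertSet := hfin.exists_finset_coe
  have hshake := sum_ncard_incidentIn hloop (A := {e ∈ C.edgeSet | f e = 1}) S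
    fun e he v hv => by
      rw [← Finset.mem_coe, hS]
      exact Walk.mem_vertSet_of_mem_ends he.1 hv
  have hsum : ∑ v ∈ S, G.valCount g 1 v + 2 * {e ∈ C.edgeSet | f e = 1}.ncard =
      ∑ v ∈ S, G.valCount f 1 v := by
    rw [← hshake, ← Finset.sum_add_distrib]
    exact Finset.sum_congr rfl fun v _ => hC.valCount_one_add hgf
  have hodd_f : S.filter (fun v => Odd (G.valCount f 1 v)) = {x} := by
    ext v
    rw [Finset.mem_filter, Finset.mem_singleton, ← Finset.mem_coe, hS]
    constructor
    · rintro ⟨hv, hvodd⟩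
      by_contra hne
      exact Nat.not_odd_iff_even.2 (heven v hv hne) hvodd
    · rintro rfl
      exact ⟨hx, hodd⟩
  have hsum_f : Odd (∑ v ∈ S, G.valCount f 1 v) := by
    rw [Finset.odd_sum_iff_odd_card_odd, hodd_f, Finset.card_singleton]
    exact odd_one
  have hsum_g : Odd (∑ v ∈ S, G.valCount g 1 v) := by
    rw [← hsum] at hsum_f
    exact (Nat.odd_add.1 hsum_f).2 (even_two_mul _)
  rw [Finset.odd_sum_iff_odd_card_odd, ← Set.ncard_coe_finset] at hsum_g
  simpa [hS, ← Finset.mem_coe] using hsum_g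

lemma IsHalfCycle.odd_ncard_isTypeT (hC : G.IsHalfCycle g C) (hD : G.IsHalfCycle g D)
    (hmeet : (D.vertSet ∩ C.vertSet).Nonempty) (hloop : G.LoopFree)
    (hgf : Set.EqOn g f C.edgeSetᶜ) (hhalf : ∀ v ∈ C.vertSet, G.valCount f (1 / 2) v = 0)
    (hone : ∀ v ∈ C.vertSet, G.valCount g 1 v ≤ 1) (hx : x ∈ C.vertSet)
    (hodd : Odd (G.valCount f 1 x)) (heven : ∀ v ∈ C.vertSet, v ≠ x → Even (G.valCount f 1 v)) :
    Odd {v ∈ D.vertSet | G.IsTypeT g v}.ncard := by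
  have hcount v (hv : v ∈ C.vertSet) : G.valCount g (1 / 2) v = 2 :=
    hC.valCount_half hloop hgf hv (hhalf v hv)
  have isTypeT_iff : ∀ v ∈ C.vertSet, (G.IsTypeT g v ↔ Odd (G.valCount g 1 v)) := by
    intro v hv
    have h_one := hone v hv
    have : G.IsTypeT g v ↔ G.valCount g 1 v = 1 := and_iff_left (hcount v hv)
    rw [this, Nat.odd_iff]
    omega
  rw [hC.vertSet_eq hD hloop hcount hmeet]
  have hset : {v ∈ C.vertSet | G.IsTypeT g v} = {v ∈ C.vertSet | Odd (G.valCount g 1 v)} :=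
    Set.ext fun v => and_congr_right (isTypeT_iff v)
  rw [hset]
  exact hC.odd_ncard_odd hloop hgf hx hodd heven

end HalvedCycle

section ClosedAtInterior

variable {W C P : G.Walk} {A : Set E} {a b : E} {i k : ℕ}

lemma valCount_one_add_of_pair [Finite E] (hgf : Set.EqOn g f Aᶜ) (hg : ∀ e ∈ A, g e = 1 / 2)
    (hab : a ≠ b) (hA : G.incidentIn A v = {a, b}) :
    G.valCount g 1 v + ((if f a = 1 then 1 else 0) + (if f b = 1 then 1 else 0)) =
      G.valCount f 1 v := by
  have haA : a ∈ G.incidentIn A v := hA ▸ .inl rfl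
  have hbA : b ∈ G.incidentIn A v := hA ▸ .inr rfl
  have hcount := valCount_add_of_pair (c := 1) hgf hab hA
  norm_num [hg a haA.1, hg b hbA.1] at hcount
  exact hcount

lemma IsLollipop.valCount_vert_succ [Finite E] (hPC : IsLollipop P C) (hf : HalfIntegral f)
    (hgf : Set.EqOn g (complementOn P.edgeSet f) C.edgeSetᶜ) (hg : ∀ e ∈ C.edgeSet, g e = 1 / 2)
    (hk : k + 1 < C.len) (h : G.IsPassable f (C.vert (k + 1)) (C.edge k) (C.edge (k + 1))) :
    G.valCount (complementOn P.edgeSet f) (1 / 2) (C.vert (k + 1)) = 0 ∧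
      Even (G.valCount (complementOn P.edgeSet f) 1 (C.vert (k + 1))) ∧
      G.valCount g 1 (C.vert (k + 1)) ≤ 1 := by
  have hcount := valCount_one_add_of_pair hgf hg (hPC.isCycle.isLasso.edge_ne_edge_succ hk)
    (hPC.isCycle.incidentIn_vert_succ hk)
  rw [hPC.complementOn_eq (Walk.edge_mem_edgeSet hk),
    hPC.complementOn_eq (Walk.edge_mem_edgeSet (by omega))] at hcount
  have h_eq := hPC.valCount_complementOn_of_ne (f := f) (Walk.vert_mem_vertSet hk.le)
    (hPC.isCycle.vert_succ_ne_vert_zero hk)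
  rw [h_eq] at hcount ⊢
  rw [h_eq, Nat.even_iff]
  refine ⟨h.valCount_half, ?_⟩
  rcases h.valCount_one hf (Walk.vert_succ_mem_ends_edge (by omega)) (Walk.vert_mem_ends_edge hk)
    with ⟨h_one, -⟩ | ⟨h_one, h_edge⟩
  · omega
  · rcases h_edge with h_edge | h_edge <;> rw [if_pos h_edge] at hcount <;> omega

lemma IsLollipop.valCount_vert_zero [Finite E] (hPC : IsLollipop P C) (hloop : G.LoopFree)
    (hf : HalfIntegral f) (hgf : Set.EqOn g (complementOn P.edgeSet f) C.edgeSetᶜ)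
    (hg : ∀ e ∈ C.edgeSet, g e = 1 / 2)
    (hfirst : G.IsPassable f (C.vert 0) (P.edge (P.len - 1)) (C.edge 0))
    (hlast : G.IsPassable f (C.vert 0) (P.edge (P.len - 1)) (C.edge (C.len - 1))) :
    G.valCount (complementOn P.edgeSet f) (1 / 2) (C.vert 0) = 0 ∧
      Odd (G.valCount (complementOn P.edgeSet f) 1 (C.vert 0)) ∧
      G.valCount g 1 (C.vert 0) ≤ 1 := by
  have h_half := hPC.valCount_complementOn_vert_zero (f := f) (1 / 2)
  have h_one := hPC.valCount_complementOn_vert_zero (f := f) 1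
  have hcount := valCount_one_add_of_pair hgf hg (hPC.isCycle.edge_zero_ne_edge_last hloop)
    hPC.isCycle.incidentIn_vert_zero
  obtain ⟨hfirst_mem, hfirst_C⟩ : C.edge 0 ∈ G.incidentIn C.edgeSet (C.vert 0) :=
    hPC.isCycle.incidentIn_vert_zero ▸ .inl rfl
  obtain ⟨hlast_mem, hlast_C⟩ : C.edge (C.len - 1) ∈ G.incidentIn C.edgeSet (C.vert 0) :=
    hPC.isCycle.incidentIn_vert_zero ▸ .inr rfl
  rw [hPC.complementOn_eq hfirst_mem, hPC.complementOn_eq hlast_mem] at hcount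
  rw [hfirst.valCount_half] at h_half
  have integral := eq_zero_or_eq_one_of_valCount_half hf hfirst.valCount_half
    hPC.vert_zero_mem_ends
  rw [Nat.odd_iff]
  rcases hfirst.valCount_one hf hPC.vert_zero_mem_ends hfirst_C
      with ⟨hf_one, hp, ha⟩ | ⟨hf_one, ha⟩ <;>
    rcases hlast.valCount_one hf hPC.vert_zero_mem_ends hlast_C
      with ⟨hf_one', -, hb⟩ | ⟨hf_one', hb⟩
  · norm_num [hp, ha, hb, hf_one] at h_half h_one hcount
    omega
  · omega
  · omega
  · rcases integral with hp | hp
    · norm_num [hp] at ha hb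
      norm_num [hp, ha, hb, hf_one] at h_half h_one hcount
      omega
    · norm_num [hp, hf_one] at h_half h_one
      omega

theorem IsLollipop.isBasicSCyclePacking_of_halved [Finite E] (hPC : IsLollipop P C)
    (hloop : G.LoopFree) (hP : G.IsAlternating s f P) (hf : G.IsBasicSCyclePacking s f)
    (hgf : Set.EqOn g (complementOn P.edgeSet f) C.edgeSetᶜ) (hg : ∀ e ∈ C.edgeSet, g e = 1 / 2)
    (hinner : ∀ k, k + 1 < C.len →
      G.IsPassable f (C.vert (k + 1)) (C.edge k) (C.edge (k + 1)))
    (hfirst : G.IsPassable f (C.vert 0) (P.edge (P.len - 1)) (C.edge 0))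
    (hlast : G.IsPassable f (C.vert 0) (P.edge (P.len - 1)) (C.edge (C.len - 1))) :
    G.IsBasicSCyclePacking s g := by
  have hC : G.IsHalfCycle g C := ⟨hPC.isCycle, hg⟩
  have g_half : HalfIntegral g :=
    hf.halfIntegral.complementOn.of_eqOn_compl hgf fun e he => .inr (.inl (hg e he))
  obtain ⟨root_half, root_odd, root_one⟩ :=
    hPC.valCount_vert_zero hloop hf.halfIntegral hgf hg hfirst hlast
  have inner k (hk : k + 1 < C.len) :=
    hPC.valCount_vert_succ hf.halfIntegral hgf hg hk (hinner k hk)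
  have half : ∀ v ∈ C.vertSet, G.valCount (complementOn P.edgeSet f) (1 / 2) v = 0 :=
    hPC.isCycle.forall_vertSet_iff.2 ⟨root_half, fun k hk => (inner k hk).1⟩
  have even : ∀ v ∈ C.vertSet, v ≠ C.vert 0 →
      Even (G.valCount (complementOn P.edgeSet f) 1 v) :=
    hPC.isCycle.forall_vertSet_iff.2
      ⟨fun h => absurd rfl h, fun k hk _ => (inner k hk).2.1⟩
  have one : ∀ v ∈ C.vertSet, G.valCount g 1 v ≤ 1 :=
    hPC.isCycle.forall_vertSet_iff.2 ⟨root_one, fun k hk => (inner k hk).2.2⟩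
  refine hPC.isBasicSCyclePacking hP hgf hf g_half (fun v hv => ?_) fun D hD hmeet => ?_
  · exact (hasBasicType_iff g_half).2
      (.inr ⟨hC.valCount_half hloop hgf hv (half v hv), one v hv⟩)
  · exact hC.odd_ncard_isTypeT hD hmeet hloop hgf half one
      (Walk.vert_mem_vertSet (Nat.zero_le _)) root_odd even

lemma Walk.IsLasso.isLollipop (hW : W.IsLasso) (hpos : 0 < i) (hlt : i < W.len)
    (hclosed : W.vert W.len = W.vert i) : IsLollipop (W.take i hpos hlt.le) (W.drop i hlt) := by
  have hcycle := hW.isCycle_drop hlt hclosed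
  have hlen : (W.take i hpos hlt.le).len = i := rfl
  refine ⟨hcycle, ?_, fun k hk hmem => ?_⟩
  · rw [hlen, Walk.vert_take hpos hlt.le le_rfl, Walk.vert_drop hlt (Nat.zero_le _), add_zero]
  · rw [hcycle.vertSet_eq_image] at hmem
    obtain ⟨j, hj, heq⟩ := hmem
    have hk : k < i := hk
    have hj : j < W.len - i := hj
    rw [Walk.vert_take hpos hlt.le hk.le, Walk.vert_drop hlt hj.le] at heq
    have := hW.injOn_vert (Set.mem_Iio.2 (show i + j < W.len by omega))
      (Set.mem_Iio.2 (hk.trans hlt)) heq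
    omega

theorem IsAlternating.isBasicSCyclePacking_of_closed [Finite E] (hW : G.IsAlternating s f W)
    (hloop : G.LoopFree) (hf : G.IsBasicSCyclePacking s f) (hpos : 0 < i) (hlt : i < W.len)
    (hclosed : W.vert W.len = W.vert i)
    (hclosing : G.IsPassable f (W.vert i) (W.edge (i - 1)) (W.edge (W.len - 1)))
    (hgf : Set.EqOn g (complementOn (W.take i hpos hlt.le).edgeSet f) (W.drop i hlt).edgeSetᶜ)
    (hg : ∀ e ∈ (W.drop i hlt).edgeSet, g e = 1 / 2) :
    G.IsBasicSCyclePacking s g := by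
  have last_take : (W.take i hpos hlt.le).edge ((W.take i hpos hlt.le).len - 1) =
      W.edge (i - 1) := Walk.edge_take hpos hlt.le (by simpa [Walk.take] using hpos)
  have last_drop : (W.drop i hlt).edge ((W.drop i hlt).len - 1) = W.edge (W.len - 1) := by
    have hlen : (W.drop i hlt).len = W.len - i := rfl
    rw [hlen, Walk.edge_drop hlt (by omega)]
    congr 1
    omega
  have edge_zero : (W.drop i hlt).edge 0 = W.edge i := Walk.edge_drop hlt (by omega)
  have vert_zero : (W.drop i hlt).vert 0 = W.vert i := Walk.vert_drop hlt (Nat.zero_le _)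
  refine (hW.isLasso.isLollipop hpos hlt hclosed).isBasicSCyclePacking_of_halved hloop
    (hW.take hpos hlt.le) hf hgf hg (fun k hk => ?_) ?_ ?_
  · have hk : k + 1 < W.len - i := hk
    rw [Walk.vert_drop hlt hk.le, Walk.edge_drop hlt (by omega), Walk.edge_drop hlt hk]
    exact hW.isPassable (i + k) (by omega)
  · rw [vert_zero, last_take, edge_zero]
    obtain ⟨j, rfl⟩ := Nat.exists_eq_add_of_le' hpos
    exact hW.isPassable j hlt
  · rwa [vert_zero, last_take, last_drop]

end ClosedAtInterior

section ClosedAtHalfCycle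

variable {C P : G.Walk} {a b e : E} {k : ℕ}

open Classical in
/-- On `C`, traversed from `C.vert 0`, the function `g` alternates between `0` and `1`, starting
with `0` and switching at each type-T vertex of `f`. The segment index of an edge is the number of
type-T vertices passed before it, not counting the starting vertex. -/
def AlternatesOn (G : Multigraph V E) (f g : E → ℝ) (C : G.Walk) : Prop :=
  ∀ j < C.len,
    g (C.edge j) = if Even (Nat.count (fun k => G.IsTypeT f (C.vert (k + 1))) j) then 0 else 1

lemma AlternatesOn.edge_zero (h : G.AlternatesOn f g C) : g (C.edge 0) = 0 := by
  rw [h 0 C.len_pos, Nat.count_zero, if_pos Even.zero]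

lemma AlternatesOn.eq_zero_or_eq_one (h : G.AlternatesOn f g C) (he : e ∈ C.edgeSet) :
    g e = 0 ∨ g e = 1 := by
  obtain ⟨j, hj, rfl⟩ := he
  rw [h j hj]
  exact ite_eq_or_eq _ _ _

open Classical in
lemma AlternatesOn.edge_succ (h : G.AlternatesOn f g C) (hk : k + 1 < C.len) :
    g (C.edge (k + 1)) =
      if G.IsTypeT f (C.vert (k + 1)) then 1 - g (C.edge k) else g (C.edge k) := by
  rw [h _ hk, h k (by omega), Nat.count_succ]
  split_ifs <;> grind

open Classical in
lemma AlternatesOn.edge_last (h : G.AlternatesOn f g C) (hC : C.IsCycle)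
    (hodd : Odd {v ∈ C.vertSet | G.IsTypeT f v}.ncard) :
    g (C.edge (C.len - 1)) = if G.IsTypeT f (C.vert 0) then 0 else 1 := by
  rw [hC.ncard_sep_vertSet_eq_count] at hodd
  rw [h _ (Nat.sub_lt C.len_pos Nat.one_pos)]
  split_ifs <;> grind

variable [Finite E]

lemma IsHalfCycle.valCount_of_mem (hC : G.IsHalfCycle f C) (hf : G.IsBasicSCyclePacking s f)
    (hv : v ∈ C.vertSet) : G.valCount f (1 / 2) v = 2 ∧ G.valCount f 1 v ≤ 1 := by
  have half_ne_zero := hC.valCount_ne_zero hv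
  have hvs : v ≠ s := by
    rintro rfl
    exact half_ne_zero (valCount_half_eq_zero fun e => hf.eq_zero_or_eq_one)
  exact ((hasBasicType_iff hf.halfIntegral).1 (hf.hasBasicType hvs)).resolve_left
    fun h => half_ne_zero h.1

lemma IsHalfCycle.isTypeT_iff (hC : G.IsHalfCycle f C) (hf : G.IsBasicSCyclePacking s f)
    (hv : v ∈ C.vertSet) : G.IsTypeT f v ↔ G.valCount f 1 v = 1 :=
  and_iff_left (hC.valCount_of_mem hf hv).1

lemma IsAlternating.isLollipop (hP : G.IsAlternating s f P) (hf : G.IsBasicSCyclePacking s f)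
    (hC : G.IsHalfCycle f C) (hroot : C.vert 0 = P.vert P.len) : IsLollipop P C :=
  ⟨hC.isCycle, hroot, fun _ hk hmem => hC.valCount_ne_zero hmem (hP.valCount_half_vert hf hk)⟩

lemma AlternatesOn.valCount_half (hg : G.AlternatesOn f g C) (hloop : G.LoopFree)
    (hP : G.IsAlternating s f P) (hf : G.IsBasicSCyclePacking s f) (hC : G.IsHalfCycle f C)
    (hgf : Set.EqOn g (complementOn P.edgeSet f) C.edgeSetᶜ) (hv : v ∈ C.vertSet) :
    G.valCount g (1 / 2) v = 0 := by
  refine valCount_half_eq_zero fun e he => ?_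
  by_cases heC : e ∈ C.edgeSet
  · exact hg.eq_zero_or_eq_one heC
  rw [hgf heC]
  by_cases heP : e ∈ P.edgeSet
  · exact complementOn_eq_zero_or_eq_one (hP.eq_zero_or_eq_one hf heP)
  · rw [complementOn_eqOn_compl heP]
    exact (hf.halfIntegral e).imp_right (Or.resolve_left ·
      fun h => heC (hC.mem_edgeSet hloop hv (hC.valCount_of_mem hf hv).1 he h))

lemma IsLollipop.valCount_one_of_incidentIn (hPC : IsLollipop P C) (hC : G.IsHalfCycle f C)
    (hgf : Set.EqOn g (complementOn P.edgeSet f) C.edgeSetᶜ) (hab : a ≠ b)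
    (hincident : G.incidentIn C.edgeSet v = {a, b}) :
    G.valCount g 1 v = G.valCount (complementOn P.edgeSet f) 1 v +
      ((if g a = 1 then 1 else 0) + (if g b = 1 then 1 else 0)) := by
  have haC : a ∈ C.edgeSet := (hincident.ge (.inl rfl)).1
  have hbC : b ∈ C.edgeSet := (hincident.ge (.inr rfl)).1
  have hcount := valCount_add_of_pair (c := 1) hgf hab hincident
  rw [hPC.complementOn_eq haC, hPC.complementOn_eq hbC, hC.eq_half a haC,
    hC.eq_half b hbC] at hcount
  norm_num at hcount
  exact hcount

lemma IsLollipop.valCount_one_vert_succ (hPC : IsLollipop P C)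
    (hf : G.IsBasicSCyclePacking s f) (hC : G.IsHalfCycle f C)
    (hgf : Set.EqOn g (complementOn P.edgeSet f) C.edgeSetᶜ) (hg : G.AlternatesOn f g C)
    (hk : k + 1 < C.len) :
    G.valCount g 1 (C.vert (k + 1)) = 0 ∨ G.valCount g 1 (C.vert (k + 1)) = 2 := by
  have hv : C.vert (k + 1) ∈ C.vertSet := Walk.vert_mem_vertSet hk.le
  have hcount := hPC.valCount_one_of_incidentIn hC hgf (hC.isCycle.isLasso.edge_ne_edge_succ hk)
    (hC.isCycle.incidentIn_vert_succ hk)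
  have h_one := (hC.valCount_of_mem hf hv).2
  rw [hPC.valCount_complementOn_of_ne hv (hC.isCycle.vert_succ_ne_vert_zero hk),
    hg.edge_succ hk] at hcount
  simp only [hC.isTypeT_iff hf hv] at hcount
  rcases hg.eq_zero_or_eq_one (Walk.edge_mem_edgeSet (show k < C.len by omega)) with h | h <;>
    norm_num [h] at hcount <;> split_ifs at hcount <;> omega

lemma IsLollipop.valCount_one_vert_zero (hPC : IsLollipop P C) (hloop : G.LoopFree)
    (hP : G.IsAlternating s f P) (hf : G.IsBasicSCyclePacking s f) (hC : G.IsHalfCycle f C)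
    (hgf : Set.EqOn g (complementOn P.edgeSet f) C.edgeSetᶜ) (hg : G.AlternatesOn f g C) :
    G.valCount g 1 (C.vert 0) = 0 ∨ G.valCount g 1 (C.vert 0) = 2 := by
  have hv : C.vert 0 ∈ C.vertSet := Walk.vert_mem_vertSet (Nat.zero_le _)
  have hcount := hPC.valCount_one_of_incidentIn hC hgf (hC.isCycle.edge_zero_ne_edge_last hloop)
    hC.isCycle.incidentIn_vert_zero
  have h_flip := hPC.valCount_complementOn_vert_zero (f := f) 1
  have h_one := (hC.valCount_of_mem hf hv).2
  have h_entry : f (P.edge (P.len - 1)) = 1 → G.valCount f 1 (C.vert 0) ≠ 0 :=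
    fun h h_zero => valCount_eq_zero_iff.1 h_zero _ hPC.vert_zero_mem_ends h
  rw [hg.edge_zero, hg.edge_last hC.isCycle (hf.odd_ncard_isTypeT hC)] at hcount
  simp only [hC.isTypeT_iff hf hv] at hcount
  rcases hP.eq_zero_or_eq_one hf (Walk.edge_mem_edgeSet (Nat.sub_lt P.len_pos Nat.one_pos))
    with h | h <;> norm_num [h] at hcount h_flip h_entry <;> split_ifs at hcount <;> omega

theorem IsLollipop.isBasicSCyclePacking_of_alternatesOn (hPC : IsLollipop P C)
    (hloop : G.LoopFree) (hP : G.IsAlternating s f P) (hf : G.IsBasicSCyclePacking s f)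
    (hC : G.IsHalfCycle f C) (hgf : Set.EqOn g (complementOn P.edgeSet f) C.edgeSetᶜ)
    (hg : G.AlternatesOn f g C) : G.IsBasicSCyclePacking s g := by
  have g_half : HalfIntegral g := hf.halfIntegral.complementOn.of_eqOn_compl hgf
    fun e he => (hg.eq_zero_or_eq_one he).imp_right .inr
  have half : ∀ v ∈ C.vertSet, G.valCount g (1 / 2) v = 0 :=
    fun v hv => hg.valCount_half hloop hP hf hC hgf hv
  have one : ∀ v ∈ C.vertSet, G.valCount g 1 v = 0 ∨ G.valCount g 1 v = 2 :=
    hC.isCycle.forall_vertSet_iff.2 ⟨hPC.valCount_one_vert_zero hloop hP hf hC hgf hg,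
      fun k hk => hPC.valCount_one_vert_succ hf hC hgf hg hk⟩
  refine hPC.isBasicSCyclePacking hP hgf hf g_half (fun v hv => ?_) fun D hD => ?_
  · exact (hasBasicType_iff g_half).2 (.inl ⟨half v hv, one v hv⟩)
  · rintro ⟨v, hvD, hvC⟩
    exact absurd (half v hvC) (hD.valCount_ne_zero hvD)

end ClosedAtHalfCycle

section Augmenting

variable {W : G.Walk}

lemma IsAugmentingWalk.isAlternating (hW : G.IsAugmentingWalk s f W) : G.IsAlternating s f W := by
  obtain ⟨hstart, hfirst, hedges, hverts, hinner, -⟩ := hW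
  refine ⟨Walk.isLasso_iff.2 ⟨hedges, hverts⟩, ?_, ?_, fun k hk => ?_⟩
  · rwa [← Walk.start_eq_vert]
  · rwa [Walk.edges_eq_edge] at hfirst
  · have := hinner ⟨k + 1, hk⟩ k.succ_pos
    rwa [Walk.verts_eq_vert, Walk.edges_eq_edge, Walk.edges_eq_edge] at this

lemma IsAugmentingWalk.edge_last (hW : G.IsAugmentingWalk s f W) (hfinish : W.finish = s) :
    f (W.edge (W.len - 1)) = 0 := by
  obtain ⟨hstart, -, -, -, -, hclosing, -⟩ := hW
  rw [← Walk.edges_eq_edge ⟨W.len - 1, Nat.sub_lt W.len_pos Nat.one_pos⟩]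
  rcases hclosing ⟨0, W.len_pos⟩ (hfinish.trans hstart.symm) with h | h | h
  · exact h.2
  · exact absurd hfinish h.1
  · exact absurd hfinish h.1

lemma IsAugmentingWalk.pos_of_finish_eq (hW : G.IsAugmentingWalk s f W) (hfinish : W.finish ≠ s)
    {i : Fin W.len} (hi : W.finish = W.verts i.castSucc) : 0 < i.val := by
  rw [Nat.pos_iff_ne_zero]
  intro h
  rw [Walk.verts_eq_vert, Fin.val_castSucc, h, hW.isAlternating.vert_zero] at hi
  exact hfinish hi

lemma IsAugmentingWalk.isPassable_closing (hW : G.IsAugmentingWalk s f W)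
    (hfinish : W.finish ≠ s) {i : Fin W.len} (hi : W.finish = W.verts i.castSucc) :
    G.IsPassable f (W.vert i) (W.edge (i - 1)) (W.edge (W.len - 1)) := by
  obtain ⟨-, -, -, -, -, hclosing, -⟩ := hW
  have hclosing := (hclosing i hi).resolve_left fun h => hfinish h.1
  rw [hi, Walk.verts_eq_vert, Walk.edges_eq_edge, Walk.edges_eq_edge] at hclosing
  exact hclosing.imp And.right And.right

lemma IsAugmentingWalk.augment_root [Fintype E] (hW : G.IsAugmentingWalk s f W)
    (hloop : G.LoopFree) (hf : G.IsBasicSCyclePacking s f) (hfinish : W.finish = s)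
    (hflip : ∀ j, g (W.edges j) = 1 - f (W.edges j))
    (hoff : ∀ e, (∀ j, e ≠ W.edges j) → g e = f e) :
    G.IsBasicSCyclePacking s g ∧ G.basicSize s g = G.basicSize s f + 1 := by
  have hclosed : W.vert W.len = s := by rwa [← Walk.finish_eq_vert]
  have hg : g = complementOn W.edgeSet f := by
    refine eq_complementOn ?_ fun e he => hoff e (Walk.forall_edges_ne_iff.2 he)
    rintro _ ⟨j, hj, rfl⟩
    simpa only [Walk.edges_eq_edge] using hflip ⟨j, hj⟩
  rw [hg]
  exact ⟨hW.isAlternating.isBasicSCyclePacking_complementOn hf hclosed,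
    hW.isAlternating.basicSize_complementOn hloop hclosed (hW.edge_last hfinish)⟩

lemma IsAugmentingWalk.augment_interior [Fintype E] (hW : G.IsAugmentingWalk s f W)
    (hloop : G.LoopFree) (hf : G.IsBasicSCyclePacking s f) (hfinish : W.finish ≠ s)
    {i : Fin W.len} (hi : W.finish = W.verts i.castSucc)
    (hflip : ∀ j : Fin W.len, j.val < i.val → g (W.edges j) = 1 - f (W.edges j))
    (hhalf : ∀ j : Fin W.len, i.val ≤ j.val → g (W.edges j) = 1 / 2)
    (hoff : ∀ e, (∀ j, e ≠ W.edges j) → g e = f e) :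
    G.IsBasicSCyclePacking s g ∧ G.basicSize s g = G.basicSize s f + 1 / 2 := by
  have hpos := hW.pos_of_finish_eq hfinish hi
  have hclosed : W.vert W.len = W.vert i := by
    rwa [← Walk.finish_eq_vert, ← Fin.val_castSucc, ← Walk.verts_eq_vert]
  have hgf : Set.EqOn g (complementOn (W.take i hpos i.isLt.le).edgeSet f)
      (W.drop i i.isLt).edgeSetᶜ := by
    refine eqOn_complementOn ?_ ?_
    · rw [Walk.edgeSet_take, Set.forall_mem_image]
      intro j hj
      simpa only [Walk.edges_eq_edge] using hflip ⟨j, lt_trans hj i.isLt⟩ hj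
    · rw [Walk.edgeSet_take_union_edgeSet_drop]
      exact fun e he => hoff e (Walk.forall_edges_ne_iff.2 he)
  have hg : ∀ e ∈ (W.drop i i.isLt).edgeSet, g e = 1 / 2 := by
    rw [Walk.edgeSet_drop, Set.forall_mem_image]
    intro j hj
    simpa only [Walk.edges_eq_edge] using hhalf ⟨j, hj.2⟩ hj.1
  have hA := hW.isAlternating
  exact ⟨hA.isBasicSCyclePacking_of_closed hloop hf hpos i.isLt hclosed
      (hW.isPassable_closing hfinish hi) hgf hg,
    (hA.isLasso.isLollipop hpos i.isLt hclosed).basicSize_eq (hA.take hpos i.isLt.le) hgf⟩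

lemma IsAugmentingWalk.augment_halfCycle [Fintype E] (hW : G.IsAugmentingWalk s f W)
    (hloop : G.LoopFree) (hf : G.IsBasicSCyclePacking s f) {C : G.Walk} (hC : C.IsCycle)
    (hroot : C.verts 0 = W.finish) (hhalf : ∀ j, f (C.edges j) = 1 / 2)
    (hflip : ∀ j, g (W.edges j) = 1 - f (W.edges j))
    (hsplit : ∀ j : Fin C.len, g (C.edges j) =
      if Even (Nat.card {m : Fin C.len //
        1 ≤ m.val ∧ m.val ≤ j.val ∧ G.IsTypeT f (C.verts m.castSucc)}) then 0 else 1)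
    (hoff : ∀ e, (∀ j, e ≠ W.edges j) → (∀ j, e ≠ C.edges j) → g e = f e) :
    G.IsBasicSCyclePacking s g ∧ G.basicSize s g = G.basicSize s f + 1 / 2 := by
  classical
  have half_cycle : G.IsHalfCycle f C := by
    refine ⟨hC, ?_⟩
    rintro _ ⟨j, hj, rfl⟩
    simpa only [Walk.edges_eq_edge] using hhalf ⟨j, hj⟩
  have hA := hW.isAlternating
  have hWC : IsLollipop W C := hA.isLollipop hf half_cycle
    (by rw [← Walk.finish_eq_vert, ← hroot, Walk.verts_eq_vert]; rfl)
  have hgf : Set.EqOn g (complementOn W.edgeSet f) C.edgeSetᶜ := by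
    refine eqOn_complementOn ?_ fun e he => hoff e
      (Walk.forall_edges_ne_iff.2 fun h => he (.inl h))
      (Walk.forall_edges_ne_iff.2 fun h => he (.inr h))
    rintro _ ⟨j, hj, rfl⟩
    simpa only [Walk.edges_eq_edge] using hflip ⟨j, hj⟩
  have hg : G.AlternatesOn f g C := fun j hj => by
    have := hsplit ⟨j, hj⟩
    rwa [Walk.edges_eq_edge, Walk.natCard_verts_le_eq_count _ hj] at this
  exact ⟨hWC.isBasicSCyclePacking_of_alternatesOn hloop hA hf half_cycle hgf hg,
    hWC.basicSize_eq hA hgf⟩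

end Augmenting

end Multigraph

/-- augmenting a basic `s`-cycle packing `f` along an
`f`-augmenting walk `W` yields a basic `s`-cycle packing whose size is that of
`f` plus one if `W` ends at `s`, and plus `1/2` otherwise. -/
theorem stmt12_augment {V E : Type} [Fintype E] (G : Multigraph V E)
    (hloop : G.LoopFree) (s : V) (f : E → ℝ) (hf : G.IsBasicSCyclePacking s f)
    (W : G.Walk) (hW : G.IsAugmentingWalk s f W)
    (g : E → ℝ) (hg : G.AugmentedAlong s f W g) :
    G.IsBasicSCyclePacking s g ∧
    (W.finish = s → G.basicSize s g = G.basicSize s f + 1) ∧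
    (W.finish ≠ s → G.basicSize s g = G.basicSize s f + 1/2) := by
  rcases hg with ⟨hfinish, hflip, hoff⟩ | ⟨hfinish, i, hi, hflip, hhalf, hoff⟩ |
    ⟨hfinish, -, C, hC, hroot, hhalf, hflip, hsplit, hoff⟩
  · have ⟨hbasic, hsize⟩ := hW.augment_root hloop hf hfinish hflip hoff
    exact ⟨hbasic, fun _ => hsize, fun h => absurd hfinish h⟩
  · have ⟨hbasic, hsize⟩ := hW.augment_interior hloop hf hfinish hi hflip hhalf hoff
    exact ⟨hbasic, fun h => absurd h hfinish, fun _ => hsize⟩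
  · have ⟨hbasic, hsize⟩ := hW.augment_halfCycle hloop hf hC hroot hhalf hflip hsplit hoff
    exact ⟨hbasic, fun h => absurd h hfinish, fun _ => hsize⟩
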